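/- arXiv:math-ph/0010019 — 2 statements merged into one kernel-verified Lean document; each statement's English description precedes it below -/
import Mathlib

section
/- (Theorem 3.2) Fix an integer d ≥ 1, m > 0 and x ∈ ℝ^d. Then the pushed-forward measures V_{x,a} = π_* V'_{x,a} on the space Ω̄(x) of unparametrized paths converge weakly, as a → 0⁺, to (m²/2)·V_x, where V_x = π_* V'_x. -/
open MeasureTheory Filter Topology Real Set
open scoped RealInnerProductSpace ENNReal unitInterval

noncomputable section

/-- `ℝ^d` as a Euclidean space. -/
abbrev Ed (d : ℕ) := EuclideanSpace ℝ (Fin d)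

/-- The space of continuous paths `[0,1] → ℝ^d`, with the uniform metric. -/
abbrev PathSp (d : ℕ) := C(unitInterval, Ed d)

instance (d : ℕ) : MeasurableSpace (PathSp d) := borel _
instance (d : ℕ) : BorelSpace (PathSp d) := ⟨rfl⟩

/-- Evaluation of a path at a real time, clamped to `[0,1]`. -/
def evalAt {d : ℕ} (ω : PathSp d) (t : ℝ) : Ed d := ω (Set.projIcc 0 1 zero_le_one t)

/-- `Ω(x)`: continuous paths starting at `x`. -/
abbrev Omega1 {d : ℕ} (x : Ed d) := {ω : PathSp d // ω 0 = x}

/-- `Ω(x,y)`: continuous paths from `x` to `y`. -/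
abbrev Omega2 {d : ℕ} (x y : Ed d) := {ω : PathSp d // ω 0 = x ∧ ω 1 = y}

/-- clamp a real number to `[0,1]`. -/
def clamp01 (r : ℝ) : ℝ := min 1 (max 0 r)

lemma clamp01_of_nonpos {r : ℝ} (h : r ≤ 0) : clamp01 r = 0 := by
  rw [clamp01, max_eq_left h, min_eq_right zero_le_one]

lemma clamp01_of_one_le {r : ℝ} (h : 1 ≤ r) : clamp01 r = 1 := by
  rw [clamp01, max_eq_right (zero_le_one.trans h), min_eq_left h]

lemma clamp01_continuous : Continuous clamp01 :=
  continuous_const.min (continuous_const.max continuous_id)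

/-- The piecewise linear path starting at `x` with `N` steps given by the increments `v i`,
the `i`-th step being linearly parametrized by `[i/N, (i+1)/N]`. -/
def pwLinE {d : ℕ} (x : Ed d) (N : ℕ) (v : Fin N → Ed d) : PathSp d :=
  ⟨fun t => x + ∑ i : Fin N, clamp01 ((N : ℝ) * (t : ℝ) - ((i : ℕ) : ℝ)) • v i, by
    refine continuous_const.add (continuous_finset_sum _ fun i _ => ?_)
    exact ((clamp01_continuous.comp
      ((continuous_const.mul continuous_subtype_val).sub continuous_const)).smul
      continuous_const)⟩

lemma pwLinE_zero {d : ℕ} (x : Ed d) (N : ℕ) (v : Fin N → Ed d) :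
    pwLinE x N v 0 = x := by
  show x + ∑ i : Fin N, clamp01 ((N : ℝ) * ((0 : unitInterval) : ℝ) - ((i : ℕ) : ℝ)) • v i = x
  have h : ∀ i : Fin N, clamp01 ((N : ℝ) * ((0 : unitInterval) : ℝ) - ((i : ℕ) : ℝ)) = 0 := by
    intro i
    apply clamp01_of_nonpos
    have h0 : ((0 : unitInterval) : ℝ) = 0 := rfl
    rw [h0, mul_zero, zero_sub]
    exact neg_nonpos.mpr (Nat.cast_nonneg (i : ℕ))
  simp only [h, zero_smul, Finset.sum_const_zero, add_zero]

lemma pwLinE_one {d : ℕ} (x : Ed d) (N : ℕ) (v : Fin N → Ed d) :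
    pwLinE x N v 1 = x + ∑ i : Fin N, v i := by
  show x + ∑ i : Fin N, clamp01 ((N : ℝ) * ((1 : unitInterval) : ℝ) - ((i : ℕ) : ℝ)) • v i
      = x + ∑ i : Fin N, v i
  have h : ∀ i : Fin N, clamp01 ((N : ℝ) * ((1 : unitInterval) : ℝ) - ((i : ℕ) : ℝ)) = 1 := by
    intro i
    apply clamp01_of_one_le
    have h1 : ((1 : unitInterval) : ℝ) = 1 := rfl
    have h2 : ((i : ℕ) : ℝ) + 1 ≤ (N : ℝ) := by
      exact_mod_cast Nat.succ_le_of_lt i.isLt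
    rw [h1, mul_one]; linarith
  simp only [h, one_smul]

/-- Piecewise linear element of `Ω(x)` with increments `v`. -/
def pwLin1 {d : ℕ} (x : Ed d) (N : ℕ) (v : Fin N → Ed d) : Omega1 x :=
  ⟨pwLinE x N v, pwLinE_zero x N v⟩

/-- Piecewise linear element of `Ω(x,y)` with increments `v` summing to `y - x`. -/
def pwLin2 {d : ℕ} (x y : Ed d) (N : ℕ) (v : Fin N → Ed d)
    (h : x + ∑ i : Fin N, v i = y) : Omega2 x y :=
  ⟨pwLinE x N v, pwLinE_zero x N v, by rw [pwLinE_one, h]⟩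

/-- the point preceding `x_i` in the list `x, x_1, …, x_N`. -/
def prevPt {d : ℕ} (x : Ed d) {N : ℕ} (xs : Fin N → Ed d) (i : Fin N) : Ed d :=
  if (i : ℕ) = 0 then x else xs ⟨(i : ℕ) - 1, lt_of_le_of_lt (Nat.pred_le _) i.isLt⟩

/-- The discrete measure `W_{x,a,N}`, i.e. the measure
`∏_{i=1}^N (2πa²)^{-d/2} exp(-|x_i - x_{i-1}|²/(2a²)) dx_1 … dx_N` (with `x_0 = x`)
on `N`-step piecewise linear paths, placed on `{a²N} × Ω(x) ⊆ ℝ × Ω(x)`.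
For `N = 0` this is the Dirac measure at `(0, constant path at x)`. -/
def WxaN {d : ℕ} (x : Ed d) (a : ℝ) (N : ℕ) : Measure (ℝ × Omega1 x) :=
  Measure.map
    (fun xs : Fin N → Ed d =>
      ((a ^ 2 * N : ℝ), pwLin1 x N fun i => xs i - prevPt x xs i))
    (volume.withDensity fun xs : Fin N → Ed d =>
      ENNReal.ofReal (∏ i : Fin N,
        (2 * π * a ^ 2) ^ (-(d : ℝ) / 2) *
          Real.exp (-‖xs i - prevPt x xs i‖ ^ 2 / (2 * a ^ 2))))

/-- The approximating probability measure
`W_{x,a} = (1 - e^{-m²a²/2}) Σ_{N=0}^∞ e^{-m²a²N/2} W_{x,a,N}`. -/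
def Wxa {d : ℕ} (x : Ed d) (m a : ℝ) : Measure (ℝ × Omega1 x) :=
  ENNReal.ofReal (1 - Real.exp (-m ^ 2 * a ^ 2 / 2)) •
    Measure.sum fun N : ℕ =>
      ENNReal.ofReal (Real.exp (-m ^ 2 * a ^ 2 * N / 2)) • WxaN x a N

/-- The lattice step of length `a` in direction `p.1`, forwards or backwards
according to `p.2`. -/
def stepVec {d : ℕ} (a : ℝ) (p : Fin d × Bool) : Ed d :=
  (if p.2 then a else -a) • EuclideanSpace.single p.1 (1 : ℝ)

/-- The normalized counting measure `V'_{x,a,N}` giving mass `(2d)^{-N}` to each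
(piecewise linearly parametrized) `N`-step nearest-neighbour lattice path in `x + aℤ^d`
starting at `x`.  For `N = 0` it is the Dirac measure at the constant path. -/
def VxaN {d : ℕ} (x : Ed d) (a : ℝ) (N : ℕ) : Measure (Omega1 x) :=
  Measure.sum fun s : Fin N → Fin d × Bool =>
    (((2 * d : ℕ) : ℝ≥0∞) ^ N)⁻¹ •
      Measure.dirac (pwLin1 x N fun i => stepVec a (s i))

/-- The approximating probability measure
`V'_{x,a} = (1 - e^{-m²a²/(2d)}) Σ_{N=0}^∞ e^{-m²a²N/(2d)} V'_{x,a,N}`. -/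
def Vxa {d : ℕ} (x : Ed d) (m a : ℝ) : Measure (Omega1 x) :=
  ENNReal.ofReal (1 - Real.exp (-m ^ 2 * a ^ 2 / (2 * d))) •
    Measure.sum fun N : ℕ =>
      ENNReal.ofReal (Real.exp (-m ^ 2 * a ^ 2 * N / (2 * d))) • VxaN x a N

/-- `Wt` is the family of Wiener measures `(W_x^t)_{t>0}` on `Ω(x)`:
each `W_x^t` is a Borel probability measure, characterized by the characteristic
functions of its finite dimensional distributions
`∫ exp(i Σ_j ξ_j·ω(t_j)) dW_x^t = exp(-(t/2) Σ_j (t_j - t_{j-1}) |ξ_j + ⋯ + ξ_n|²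
+ i x·(ξ_1 + ⋯ + ξ_n))` for all `0 = t_0 < t_1 < ⋯ < t_n ≤ 1`. -/
def IsWienerFamily {d : ℕ} (x : Ed d) (Wt : ℝ → Measure (Omega1 x)) : Prop :=
  ∀ t : ℝ, 0 < t → (IsProbabilityMeasure (Wt t) ∧
    ∀ (n : ℕ) (ts : ℕ → ℝ), ts 0 = 0 → (∀ i < n, ts i < ts (i + 1)) → ts n ≤ 1 →
      ∀ ξ : Fin n → Ed d,
        (∫ ω : Omega1 x, Complex.exp (Complex.I *
            ((∑ i : Fin n, ⟪ξ i, evalAt ω.1 (ts ((i : ℕ) + 1))⟫ : ℝ) : ℂ)) ∂(Wt t))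
          = Complex.exp
              (((-(t / 2) * ∑ i : Fin n,
                  (ts ((i : ℕ) + 1) - ts (i : ℕ)) * ‖∑ j ∈ Finset.Ici i, ξ j‖ ^ 2 : ℝ) : ℂ)
                + Complex.I * ((⟪∑ j, ξ j, x⟫ : ℝ) : ℂ)))


/-- The reparametrization pseudo-distance
`d̄(ω,ω') = inf { d(ω, ω'∘φ) : φ an increasing homeomorphism of [0,1] }`. -/
def quotDist {d : ℕ} (ω ω' : PathSp d) : ℝ :=
  ⨅ φ : {φ : unitInterval ≃ₜ unitInterval // Monotone ⇑φ},
    dist ω (ω'.comp ⟨⇑φ.1, φ.1.continuous⟩)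


/-! ### Maximal inequality for sums of independent steps -/

lemma Fintype.sum_fin_succ_fun {α M : Type*} [Fintype α] [AddCommMonoid M] (N : ℕ)
    (F : (Fin (N + 1) → α) → M) :
    ∑ s, F s = ∑ p, ∑ s : Fin N → α, F (Fin.cons p s) := by
  rw [← Fintype.sum_prod_type' fun p (s : Fin N → α) => F (Fin.cons p s)]
  exact (Fintype.sum_equiv (Fin.consEquiv fun _ => α) _ _ fun _ => rfl).symm

/-- The sum of the terms of `v` with indices below `j`. -/
def partialSum {E : Type*} [AddCommMonoid E] {N : ℕ} (v : Fin N → E) (j : ℕ) : E :=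
  ∑ i : Fin N, if (i : ℕ) < j then v i else 0

@[simp]
lemma partialSum_zero {E : Type*} [AddCommMonoid E] {N : ℕ} (v : Fin N → E) :
    partialSum v 0 = 0 := by
  simp [partialSum]

lemma partialSum_cons_succ {E : Type*} [AddCommMonoid E] {N : ℕ} (v : Fin (N + 1) → E) (j : ℕ) :
    partialSum v (j + 1) = v 0 + partialSum (fun i => v i.succ) j := by
  simp [partialSum, Fin.sum_univ_succ]

lemma partialSum_succ {E : Type*} [AddCommMonoid E] {N : ℕ} (v : Fin N → E) {j : ℕ} (hj : j < N) :
    partialSum v (j + 1) = partialSum v j + v ⟨j, hj⟩ := by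
  have h : v ⟨j, hj⟩ = ∑ i : Fin N, if i = ⟨j, hj⟩ then v i else 0 := by simp
  rw [h, partialSum, partialSum, ← Finset.sum_add_distrib]
  refine Finset.sum_congr rfl fun i _ => ?_
  rcases lt_trichotomy (i : ℕ) j with h | h | h
  · have : i ≠ ⟨j, hj⟩ := fun e => h.ne (congrArg Fin.val e)
    simp [h, this, h.trans (Nat.lt_succ_self j)]
  · have : i = ⟨j, hj⟩ := Fin.ext h
    simp [this]
  · have : i ≠ ⟨j, hj⟩ := fun e => h.ne' (congrArg Fin.val e)
    have h' : ¬ (i : ℕ) < j + 1 := by omega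
    simp [h.not_gt, h', this]

lemma map_partialSum {E F G : Type*} [AddCommMonoid E] [AddCommMonoid F] [FunLike G E F]
    [AddMonoidHomClass G E F] (g : G) {N : ℕ} (v : Fin N → E) (j : ℕ) :
    g (partialSum v j) = partialSum (fun i => g (v i)) j := by
  simp only [partialSum, map_sum]
  refine Finset.sum_congr rfl fun i _ => ?_
  split_ifs <;> simp

/-- Exponential maximal inequality, started at time `0`, in counting form. -/
lemma sum_indicator_exists_partialSum_le {α : Type*} [Fintype α] (X : α → ℝ) {c l : ℝ} (hc : 1 ≤ c)
    (hl : 0 ≤ l) (hX : ∑ p, exp (l * X p) ≤ Fintype.card α * c) (N : ℕ) :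
    ∀ (L : ℕ) (r : ℝ),
      ∑ s : Fin N → α,
          indicator {s | ∃ j ≤ L, r ≤ partialSum (fun i => X (s i)) j} (fun _ => (1 : ℝ)) s
        ≤ (Fintype.card α : ℝ) ^ N * (exp (-(l * r)) * c ^ L) := by
  have hnonpos : ∀ (M L : ℕ) (r : ℝ) (P : Set (Fin M → α)), r ≤ 0 →
      ∑ s : Fin M → α, indicator P (fun _ => (1 : ℝ)) s
        ≤ (Fintype.card α : ℝ) ^ M * (exp (-(l * r)) * c ^ L) := by
    intro M L r P hr
    have h1 : (1 : ℝ) ≤ exp (-(l * r)) * c ^ L :=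
      one_le_mul_of_one_le_of_one_le
        (one_le_exp (by nlinarith)) (one_le_pow₀ hc)
    calc ∑ s : Fin M → α, indicator P (fun _ => (1 : ℝ)) s
        ≤ ∑ _s : Fin M → α, (1 : ℝ) :=
          Finset.sum_le_sum fun s _ => indicator_le_self' (fun _ _ => zero_le_one) s
      _ = (Fintype.card α : ℝ) ^ M := by simp
      _ ≤ _ := le_mul_of_one_le_right (by positivity) h1
  induction N with
  | zero =>
    intro L r
    by_cases hr : r ≤ 0
    · exact hnonpos _ _ _ _ hr
    · rw [Finset.sum_eq_zero fun s _ => indicator_of_notMem ?_ _]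
      · positivity
      · rintro ⟨j, _, h⟩
        exact hr (by simpa [partialSum] using h)
  | succ N ih =>
    intro L r
    by_cases hr : r ≤ 0
    · exact hnonpos _ _ _ _ hr
    · cases L with
      | zero =>
        rw [Finset.sum_eq_zero fun s _ => indicator_of_notMem ?_ _]
        · positivity
        · rintro ⟨j, hj, h⟩
          obtain rfl : j = 0 := by omega
          rw [partialSum_zero] at h
          exact hr h
      | succ L =>
        have key : ∀ (p : α) (s : Fin N → α),
            (∃ j ≤ L + 1, r ≤ partialSum (fun i => X ((Fin.cons p s : Fin (N + 1) → α) i)) j) →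
              ∃ j ≤ L, r - X p ≤ partialSum (fun i => X (s i)) j := by
          rintro p s ⟨j, hj, h⟩
          cases j with
          | zero => simp only [partialSum_zero] at h; exact absurd h hr
          | succ j =>
            refine ⟨j, by omega, ?_⟩
            rw [partialSum_cons_succ] at h
            simp only [Fin.cons_zero, Fin.cons_succ] at h
            linarith
        rw [Fintype.sum_fin_succ_fun]
        calc _ ≤ ∑ p : α, ∑ s : Fin N → α,
              indicator {s | ∃ j ≤ L, r - X p ≤ partialSum (fun i => X (s i)) j}
                (fun _ => (1 : ℝ)) s := by
              refine Finset.sum_le_sum fun p _ => Finset.sum_le_sum fun s _ => ?_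
              by_cases h : ∃ j ≤ L + 1,
                  r ≤ partialSum (fun i => X ((Fin.cons p s : Fin (N + 1) → α) i)) j
              · rw [indicator_of_mem (by exact h), indicator_of_mem (by exact key p s h)]
              · rw [indicator_of_notMem (by exact h)]
                exact indicator_nonneg (fun _ _ => zero_le_one) _
          _ ≤ ∑ p : α, (Fintype.card α : ℝ) ^ N * (exp (-(l * (r - X p))) * c ^ L) :=
              Finset.sum_le_sum fun p _ => ih L _
          _ = (Fintype.card α : ℝ) ^ N * (exp (-(l * r)) * c ^ L) * ∑ p : α, exp (l * X p) := by
              rw [Finset.mul_sum]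
              refine Finset.sum_congr rfl fun p _ => ?_
              rw [show -(l * (r - X p)) = -(l * r) + l * X p by ring, exp_add]; ring
          _ ≤ (Fintype.card α : ℝ) ^ N * (exp (-(l * r)) * c ^ L) * (Fintype.card α * c) :=
              mul_le_mul_of_nonneg_left hX (by positivity)
          _ = _ := by ring

/-- Exponential maximal inequality for the increments after time `k`, in counting form. -/
lemma sum_indicator_exists_partialSum_sub_le {α : Type*} [Fintype α] (X : α → ℝ) {c l : ℝ}
    (hc : 1 ≤ c) (hl : 0 ≤ l) (hX : ∑ p, exp (l * X p) ≤ Fintype.card α * c) (L : ℕ) (r : ℝ)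
    (N : ℕ) :
    ∀ k : ℕ,
      ∑ s : Fin N → α, indicator {s | ∃ j ≤ L, r ≤ partialSum (fun i => X (s i)) (k + j) -
          partialSum (fun i => X (s i)) k} (fun _ => (1 : ℝ)) s
        ≤ (Fintype.card α : ℝ) ^ N * (exp (-(l * r)) * c ^ L) := by
  induction N with
  | zero =>
    intro k
    simpa [partialSum] using sum_indicator_exists_partialSum_le X hc hl hX 0 L r
  | succ N ih =>
    intro k
    cases k with
    | zero => simpa using sum_indicator_exists_partialSum_le X hc hl hX (N + 1) L r
    | succ k =>
      rw [Fintype.sum_fin_succ_fun]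
      have key : ∀ (p : α) (s : Fin N → α),
          indicator {s : Fin (N + 1) → α | ∃ j ≤ L, r ≤ partialSum (fun i => X (s i)) (k + 1 + j) -
            partialSum (fun i => X (s i)) (k + 1)} (fun _ => (1 : ℝ)) (Fin.cons p s) =
          indicator {s | ∃ j ≤ L, r ≤ partialSum (fun i => X (s i)) (k + j) -
            partialSum (fun i => X (s i)) k} (fun _ => (1 : ℝ)) s := by
        intro p s
        simp only [indicator, mem_ofPred_eq, add_right_comm k 1, partialSum_cons_succ,
          Fin.cons_succ, add_sub_add_left_eq_sub]
      simp only [key]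
      rw [Finset.sum_const, nsmul_eq_mul, Finset.card_univ, pow_succ', mul_assoc]
      exact mul_le_mul_of_nonneg_left (ih k) (Nat.cast_nonneg _)

/-! ### Piecewise linear paths and linear interpolation -/

lemma pwLinE_apply_eq {d : ℕ} (x : Ed d) (N : ℕ) (v : Fin N → Ed d) (s : unitInterval) (k : ℕ)
    (h₁ : (k : ℝ) ≤ N * s) (h₂ : N * (s : ℝ) ≤ k + 1) :
    pwLinE x N v s = x + ((1 - (N * (s : ℝ) - k)) • partialSum v k
      + (N * (s : ℝ) - k) • partialSum v (k + 1)) := by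
  change x + ∑ i : Fin N, clamp01 (N * (s : ℝ) - ((i : ℕ) : ℝ)) • v i = _
  rw [partialSum, partialSum, Finset.smul_sum, Finset.smul_sum, ← Finset.sum_add_distrib]
  congr 1
  refine Finset.sum_congr rfl fun i _ => ?_
  rcases lt_trichotomy (i : ℕ) k with h | h | h
  · have h' : ((i : ℕ) : ℝ) + 1 ≤ k := by exact_mod_cast h
    rw [clamp01_of_one_le (by linarith), if_pos h, if_pos (h.trans (Nat.lt_succ_self k)),
      ← add_smul]
    simp
  · rw [h, if_neg (lt_irrefl k), if_pos (Nat.lt_succ_self k), smul_zero, zero_add, clamp01,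
      max_eq_right (by linarith), min_eq_right (by linarith)]
  · have h' : (k : ℝ) + 1 ≤ (i : ℕ) := by exact_mod_cast h
    rw [clamp01_of_nonpos (by linarith), if_neg h.not_gt, if_neg (by omega)]
    simp

lemma norm_convexComb_sub_le {E : Type*} [SeminormedAddCommGroup E] [NormedSpace ℝ E] {y z w : E}
    {θ ε : ℝ} (h0 : 0 ≤ θ) (h1 : θ ≤ 1) (hy : ‖y - w‖ ≤ ε) (hz : ‖z - w‖ ≤ ε) :
    ‖((1 - θ) • y + θ • z) - w‖ ≤ ε := by
  have h := (convex_closedBall w ε) (mem_closedBall_iff_norm.2 hy) (mem_closedBall_iff_norm.2 hz)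
    (sub_nonneg.2 h1) h0 (by ring)
  exact mem_closedBall_iff_norm.1 h

/-- The values of a path at the times `1/n, 2/n, …, 1`. -/
def samplePath {d : ℕ} (n : ℕ) (ω : PathSp d) (i : Fin n) : Ed d :=
  evalAt ω (((i : ℕ) + 1 : ℕ) / n)

/-- The piecewise linear path from `x` through the points `y i`. -/
def polygon {d : ℕ} (x : Ed d) (n : ℕ) (y : Fin n → Ed d) : Omega1 x :=
  pwLin1 x n fun i => y i - prevPt x y i

lemma continuous_evalAt {d : ℕ} (t : ℝ) : Continuous fun ω : PathSp d => evalAt ω t :=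
  continuous_eval_const _

lemma evalAt_of_mem {d : ℕ} (ω : PathSp d) (s : unitInterval) : evalAt ω s = ω s := by
  rw [evalAt, projIcc_val]

lemma continuous_samplePath {d : ℕ} (n : ℕ) :
    Continuous fun ω : PathSp d => samplePath n ω :=
  continuous_pi fun _ => continuous_evalAt _

lemma dist_pwLin1_le {d : ℕ} (x : Ed d) (N : ℕ) (v w : Fin N → Ed d) :
    dist (pwLin1 x N v) (pwLin1 x N w) ≤ ∑ i, dist (v i) (w i) := by
  rw [Subtype.dist_eq]
  refine (ContinuousMap.dist_le (Finset.sum_nonneg fun _ _ => dist_nonneg)).2 fun s => ?_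
  change dist (x + ∑ i : Fin N, clamp01 (N * (s : ℝ) - ((i : ℕ) : ℝ)) • v i)
    (x + ∑ i : Fin N, clamp01 (N * (s : ℝ) - ((i : ℕ) : ℝ)) • w i) ≤ _
  rw [dist_add_left]
  refine (dist_sum_sum_le _ _ _).trans (Finset.sum_le_sum fun i _ => ?_)
  rw [dist_smul₀]
  refine mul_le_of_le_one_left dist_nonneg ?_
  rw [Real.norm_eq_abs, abs_le, clamp01]
  constructor
  · have : (0 : ℝ) ≤ min 1 (max 0 (N * (s : ℝ) - ((i : ℕ) : ℝ))) :=
      le_min zero_le_one (le_max_left _ _)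
    linarith
  · exact min_le_left _ _

lemma continuous_pwLin1 {d : ℕ} (x : Ed d) (N : ℕ) : Continuous (pwLin1 x N) := by
  refine continuous_iff_continuousAt.2 fun v => tendsto_iff_dist_tendsto_zero.2 ?_
  refine squeeze_zero (fun _ => dist_nonneg) (fun w => dist_pwLin1_le x N w v) ?_
  have : Continuous fun w : Fin N → Ed d => ∑ i, dist (w i) (v i) := by fun_prop
  simpa using this.tendsto v

lemma continuous_polygon {d : ℕ} (x : Ed d) (n : ℕ) : Continuous (polygon x n) := by
  refine (continuous_pwLin1 x n).comp (continuous_pi fun i => (continuous_apply i).sub ?_)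
  unfold prevPt
  split_ifs <;> fun_prop

lemma add_partialSum_samplePath {d : ℕ} {x : Ed d} (ω : Omega1 x) (n k : ℕ) (hk : k ≤ n) :
    x + partialSum (fun i => samplePath n ω.1 i - prevPt x (samplePath n ω.1) i) k
      = evalAt ω.1 ((k : ℕ) / n) := by
  induction k with
  | zero =>
    rw [partialSum_zero, add_zero, Nat.cast_zero, zero_div]
    exact ω.2.symm.trans (evalAt_of_mem ω.1 0).symm
  | succ k ih =>
    have h : prevPt x (samplePath n ω.1) ⟨k, hk⟩ = evalAt ω.1 ((k : ℕ) / n) := by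
      cases k with
      | zero =>
        simp only [prevPt, if_true, Nat.cast_zero, zero_div]
        exact ω.2.symm.trans (evalAt_of_mem ω.1 0).symm
      | succ k => simp [prevPt, samplePath]
    rw [partialSum_succ _ hk, ← add_assoc, ih (by omega), h]
    simp [samplePath]

lemma exists_nat_block {n : ℕ} (hn : 0 < n) (s : unitInterval) :
    ∃ k < n, (k : ℝ) ≤ n * s ∧ n * (s : ℝ) ≤ k + 1 := by
  have hs0 : 0 ≤ n * (s : ℝ) := mul_nonneg (Nat.cast_nonneg n) s.2.1
  by_cases h : ⌊n * (s : ℝ)⌋₊ < n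
  · exact ⟨_, h, Nat.floor_le hs0, (Nat.lt_floor_add_one _).le⟩
  · have h1 : (n : ℝ) ≤ n * s := (Nat.le_floor_iff hs0).1 (not_lt.1 h)
    have h2 : n * (s : ℝ) ≤ n := mul_le_of_le_one_right (Nat.cast_nonneg n) s.2.2
    refine ⟨n - 1, by omega, ?_, ?_⟩ <;> rw [Nat.cast_sub hn] <;> push_cast <;> linarith

/-- If a path stays within `ε` of some point on each of the `n` blocks, then it is within `2 * ε`
of its linear interpolation. -/
lemma dist_polygon_samplePath_le {d : ℕ} {x : Ed d} (ω : Omega1 x) {n : ℕ} (hn : 0 < n) {ε : ℝ}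
    (y : ℕ → Ed d)
    (h : ∀ k < n, ∀ s : unitInterval, (k : ℝ) ≤ n * s → n * (s : ℝ) ≤ k + 1 → ‖ω.1 s - y k‖ ≤ ε) :
    dist (polygon x n (samplePath n ω.1)) ω ≤ 2 * ε := by
  have hn' : (0 : ℝ) < n := Nat.cast_pos.2 hn
  have hgrid : ∀ k < n, ∀ j : ℕ, k ≤ j → j ≤ k + 1 → ‖evalAt ω.1 ((j : ℝ) / n) - y k‖ ≤ ε := by
    intro k hk j hkj hjk
    have hj : (j : ℝ) / n ∈ Icc (0 : ℝ) 1 :=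
      ⟨by positivity, (div_le_one hn').2 (by exact_mod_cast hjk.trans hk)⟩
    have e : (n : ℝ) * (j / n) = j := by field_simp
    rw [show evalAt ω.1 ((j : ℝ) / n) = ω.1 ⟨_, hj⟩ from evalAt_of_mem ω.1 ⟨_, hj⟩]
    refine h k hk _ ?_ ?_
    · rw [e]; exact_mod_cast hkj
    · rw [e]; exact_mod_cast hjk
  have hε : 0 ≤ ε := (norm_nonneg _).trans (hgrid 0 hn 0 le_rfl (Nat.zero_le _))
  rw [Subtype.dist_eq]
  refine (ContinuousMap.dist_le (by positivity)).2 fun s => ?_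
  obtain ⟨k, hk, h₁, h₂⟩ := exists_nat_block hn s
  have e : (polygon x n (samplePath n ω.1)).1 s =
      (1 - (n * (s : ℝ) - k)) • evalAt ω.1 ((k : ℝ) / n)
        + (n * (s : ℝ) - k) • evalAt ω.1 (((k + 1 : ℕ) : ℝ) / n) := by
    rw [← add_partialSum_samplePath ω n k hk.le, ← add_partialSum_samplePath ω n (k + 1) hk]
    refine (pwLinE_apply_eq x n _ s k h₁ h₂).trans ?_
    module
  have h3 := norm_convexComb_sub_le (sub_nonneg.2 h₁) (by linarith)
    (hgrid k hk k le_rfl (Nat.le_succ k)) (hgrid k hk (k + 1) (Nat.le_succ k) le_rfl)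
  rw [← e] at h3
  have h4 := h k hk s h₁ h₂
  calc dist ((polygon x n (samplePath n ω.1)).1 s) (ω.1 s)
      ≤ dist ((polygon x n (samplePath n ω.1)).1 s) (y k) + dist (ω.1 s) (y k) :=
        dist_triangle_right _ _ _
    _ ≤ 2 * ε := by rw [dist_eq_norm, dist_eq_norm]; linarith

lemma tendsto_polygon_samplePath {d : ℕ} {x : Ed d} (ω : Omega1 x) :
    Tendsto (fun n : ℕ => polygon x n (samplePath n ω.1)) atTop (𝓝 ω) := by
  refine Metric.tendsto_atTop.2 fun ε hε => ?_
  obtain ⟨δ, hδ, hω⟩ := Metric.uniformContinuous_iff.1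
    (CompactSpace.uniformContinuous_of_continuous ω.1.continuous) (ε / 4) (by positivity)
  obtain ⟨M, hM⟩ := exists_nat_gt (1 / δ)
  refine ⟨M + 1, fun n hn => ?_⟩
  have hn0 : 0 < n := by omega
  have hn' : (0 : ℝ) < n := Nat.cast_pos.2 hn0
  have hδn : 1 < n * δ := by
    have : (M : ℝ) ≤ n := by exact_mod_cast (Nat.le_succ M).trans hn
    rw [div_lt_iff₀ hδ] at hM
    nlinarith
  refine (dist_polygon_samplePath_le ω hn0 (ε := ε / 4)
    (fun k => evalAt ω.1 ((k : ℝ) / n)) fun k hk s h₁ h₂ => ?_).trans_lt (by linarith)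
  have hj : (k : ℝ) / n ∈ Icc (0 : ℝ) 1 :=
    ⟨by positivity, (div_le_one hn').2 (by exact_mod_cast hk.le)⟩
  have e : (n : ℝ) * (k / n) = k := by field_simp
  rw [show evalAt ω.1 ((k : ℝ) / n) = ω.1 ⟨_, hj⟩ from evalAt_of_mem ω.1 ⟨_, hj⟩, ← dist_eq_norm]
  refine (hω ?_).le
  rw [Subtype.dist_eq, Real.dist_eq, abs_of_nonneg]
  · refine lt_of_mul_lt_mul_left ?_ hn'.le
    change (n : ℝ) * (s - k / n) < n * δ
    rw [mul_sub, e]; linarith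
  · refine nonneg_of_mul_nonneg_right (a := (n : ℝ)) ?_ hn'
    change 0 ≤ (n : ℝ) * (s - k / n)
    rw [mul_sub, e]; linarith

/-- A polygonal path with `N` steps is close to its linear interpolation at `n` times if its
vertices do not move much during each block of `L` steps. -/
lemma dist_polygon_samplePath_pwLin1_le {d : ℕ} (x : Ed d) (N : ℕ) (v : Fin N → Ed d) {n L : ℕ}
    (hn : 0 < n) (hL : (N : ℝ) / n + 2 ≤ L) {ε : ℝ}
    (h : ∀ k < n, ∀ j ≤ L, ‖partialSum v (⌊(N : ℝ) * k / n⌋₊ + j)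
      - partialSum v ⌊(N : ℝ) * k / n⌋₊‖ ≤ ε) :
    dist (polygon x n (samplePath n (pwLin1 x N v).1)) (pwLin1 x N v) ≤ 2 * ε := by
  have hn' : (0 : ℝ) < n := Nat.cast_pos.2 hn
  refine dist_polygon_samplePath_le _ hn
    (fun k => x + partialSum v ⌊(N : ℝ) * k / n⌋₊) fun k hk s h₁ h₂ => ?_
  set j₀ := ⌊(N : ℝ) * k / n⌋₊ with hj₀
  set j := ⌊(N : ℝ) * s⌋₊ with hj
  have hs0 : 0 ≤ (N : ℝ) * s := mul_nonneg (Nat.cast_nonneg N) s.2.1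
  have hs1 : (N : ℝ) * k / n ≤ N * s := by
    rw [mul_div_assoc]
    exact mul_le_mul_of_nonneg_left ((div_le_iff₀' hn').2 h₁) (Nat.cast_nonneg N)
  have hs2 : (N : ℝ) * s ≤ N * k / n + N / n := by
    rw [← add_div, le_div_iff₀ hn']
    have := mul_le_mul_of_nonneg_left h₂ (Nat.cast_nonneg (α := ℝ) N)
    linarith
  have hjj : j₀ ≤ j := Nat.floor_mono hs1
  have hjL : j + 1 - j₀ ≤ L := by
    have h3 : (N : ℝ) * k / n < j₀ + 1 := Nat.lt_floor_add_one _
    have h4 : (j : ℝ) ≤ N * s := Nat.floor_le hs0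
    have : (j : ℝ) + 1 ≤ j₀ + L := by linarith
    have : j + 1 ≤ j₀ + L := by exact_mod_cast this
    omega
  have e := pwLinE_apply_eq x N v s j (Nat.floor_le hs0) (Nat.lt_floor_add_one _).le
  change ‖pwLinE x N v s - (x + partialSum v j₀)‖ ≤ ε
  rw [e, add_sub_add_left_eq_sub]
  refine norm_convexComb_sub_le (sub_nonneg.2 (Nat.floor_le hs0))
    (by linarith [Nat.lt_floor_add_one ((N : ℝ) * s)]) ?_ ?_
  · have := h k hk (j - j₀) (by omega)
    rwa [show j₀ + (j - j₀) = j by omega] at this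
  · have := h k hk (j + 1 - j₀) hjL
    rwa [show j₀ + (j + 1 - j₀) = j + 1 by omega] at this

/-! ### The lattice walk -/

lemma integral_VxaN {d : ℕ} (hd : 1 ≤ d) (x : Ed d) (a : ℝ) (N : ℕ) {E : Type*}
    [NormedAddCommGroup E] [NormedSpace ℝ E] [CompleteSpace E] (F : Omega1 x → E) :
    ∫ ω, F ω ∂(VxaN x a N) =
      (((2 * d : ℕ) : ℝ) ^ N)⁻¹ • ∑ s : Fin N → Fin d × Bool,
        F (pwLin1 x N fun i => stepVec a (s i)) := by
  have hc : (((2 * d : ℕ) : ℝ≥0∞) ^ N)⁻¹ ≠ ∞ :=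
    ENNReal.inv_ne_top.2 (pow_ne_zero _ (Nat.cast_ne_zero.2 (by omega)))
  rw [VxaN, Measure.sum_fintype, integral_finsetSum_measure]
  · simp only [integral_smul_measure, integral_dirac, Finset.smul_sum, ENNReal.toReal_inv,
      ENNReal.toReal_pow, ENNReal.toReal_natCast]
  · intro s _
    exact (integrable_dirac enorm_lt_top).smul_measure hc

lemma isProbabilityMeasure_VxaN {d : ℕ} (hd : 1 ≤ d) (x : Ed d) (a : ℝ) (N : ℕ) :
    IsProbabilityMeasure (VxaN x a N) := by
  have h0 : ((2 * d : ℕ) : ℝ≥0∞) ^ N ≠ 0 := pow_ne_zero _ (Nat.cast_ne_zero.2 (by omega))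
  have ht : ((2 * d : ℕ) : ℝ≥0∞) ^ N ≠ ∞ := ENNReal.pow_ne_top (ENNReal.natCast_ne_top _)
  constructor
  rw [VxaN, Measure.sum_fintype, Measure.finsetSum_apply]
  simp only [Measure.smul_apply, measure_univ, smul_eq_mul, mul_one, Finset.sum_const,
    nsmul_eq_mul, Finset.card_univ, Fintype.card_fun, Fintype.card_prod, Fintype.card_fin,
    Fintype.card_bool]
  rw [Nat.mul_comm d 2, Nat.cast_pow, ENNReal.mul_inv_cancel h0 ht]

/-- The `i`-th coordinate, with a sign given by `b`. -/
def signedCoord {d : ℕ} (i : Fin d) (b : Bool) : Ed d →L[ℝ] ℝ :=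
  (if b then (1 : ℝ) else -1) • EuclideanSpace.proj i

lemma signedCoord_apply {d : ℕ} (i : Fin d) (b : Bool) (v : Ed d) :
    signedCoord i b v = (if b then (1 : ℝ) else -1) * v i := by
  cases b <;> simp [signedCoord]

lemma norm_le_of_signedCoord_le {d : ℕ} (v : Ed d) {r : ℝ}
    (h : ∀ i b, signedCoord i b v ≤ r) : ‖v‖ ≤ d * r := by
  have h1 : ‖v‖ ≤ ∑ i, ‖v i‖ := by
    have := norm_sum_le Finset.univ fun i => v i • EuclideanSpace.single i (1 : ℝ)
    have e : ∑ i, v i • EuclideanSpace.single i (1 : ℝ) = v := by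
      ext j
      simp [Finset.sum_apply, Pi.single_apply]
    rw [e] at this
    simpa [norm_smul] using this
  refine h1.trans ?_
  calc ∑ i, ‖v i‖ ≤ ∑ _i : Fin d, r := Finset.sum_le_sum fun i _ => by
        have h2 := h i true
        have h3 := h i false
        simp only [signedCoord_apply, if_true, Bool.false_eq_true, if_false] at h2 h3
        rw [Real.norm_eq_abs, abs_le]
        constructor <;> linarith
    _ = d * r := by simp

lemma sum_exp_signedCoord_stepVec_le {d : ℕ} (i : Fin d) (b : Bool) (a l : ℝ) :
    ∑ p : Fin d × Bool, exp (l * signedCoord i b (stepVec a p))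
      ≤ (Fintype.card (Fin d × Bool) : ℝ) * exp (l ^ 2 * a ^ 2 / 2) := by
  rw [Fintype.sum_prod_type]
  have key : ∀ q : Fin d, ∑ c : Bool, exp (l * signedCoord i b (stepVec a (q, c)))
      ≤ 2 * exp (l ^ 2 * a ^ 2 / 2) := by
    intro q
    by_cases hq : q = i
    · subst hq
      have h := cosh_le_exp_half_sq (l * a)
      rw [cosh_eq, mul_pow] at h
      have e : exp (l * signedCoord q b (stepVec a (q, true))) +
          exp (l * signedCoord q b (stepVec a (q, false))) = exp (l * a) + exp (-(l * a)) := by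
        cases b <;> simp [signedCoord_apply, stepVec, add_comm]
      rw [Fintype.sum_bool, e]
      linarith
    · have h1 : (1 : ℝ) ≤ exp (l ^ 2 * a ^ 2 / 2) := one_le_exp (by positivity)
      have e : ∀ c, signedCoord i b (stepVec a (q, c)) = 0 := by
        intro c
        cases c <;> simp [signedCoord_apply, stepVec, Ne.symm hq]
      rw [Fintype.sum_bool, e, e, mul_zero, exp_zero]
      linarith
  refine (Finset.sum_le_sum fun q _ => key q).trans_eq ?_
  simp [mul_assoc]

/-- The mean error made by replacing the lattice walk by its linear interpolation at `n` times. -/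
lemma abs_integral_polygon_sub_le {d : ℕ} (hd : 1 ≤ d) (x : Ed d) (a : ℝ) (N : ℕ) {n L : ℕ}
    (hn : 0 < n) (hL : (N : ℝ) / n + 2 ≤ L) {ε l M K : ℝ} (hε : 0 ≤ ε)
    (hl : 0 ≤ l) (hK : 0 ≤ K)
    (f : Omega1 x → ℝ) (hM : ∀ ω ω', dist (f ω) (f ω') ≤ M)
    (hf : ∀ ω ω', dist (f ω) (f ω') ≤ K * dist ω ω') :
    |∫ ω, f (polygon x n (samplePath n ω.1)) ∂(VxaN x a N) - ∫ ω, f ω ∂(VxaN x a N)|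
      ≤ K * (2 * ε) +
        M * (n * (2 * d) * (exp (-(l * (ε / d))) * exp (l ^ 2 * a ^ 2 / 2) ^ L)) := by
  have hd' : (0 : ℝ) < d := Nat.cast_pos.2 hd
  have hM0 : 0 ≤ M := dist_nonneg.trans (hM (pwLin1 x 0 0) (pwLin1 x 0 0))
  set A : ℝ := ((2 * d : ℕ) : ℝ) ^ N with hA
  have hApos : 0 < A := pow_pos (Nat.cast_pos.2 (by omega)) _
  let bad (k : ℕ) (i : Fin d) (b : Bool) : Set (Fin N → Fin d × Bool) :=
    {s | ∃ j ≤ L, ε / d ≤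
      partialSum (fun q => signedCoord i b (stepVec a (s q))) (⌊(N : ℝ) * k / n⌋₊ + j) -
      partialSum (fun q => signedCoord i b (stepVec a (s q))) ⌊(N : ℝ) * k / n⌋₊}
  let B (s : Fin N → Fin d × Bool) : ℝ :=
    ∑ k ∈ Finset.range n, ∑ i : Fin d, ∑ b : Bool, indicator (bad k i b) (fun _ => (1 : ℝ)) s
  have hind : ∀ k i b s, 0 ≤ indicator (bad k i b) (fun _ => (1 : ℝ)) s := fun k i b s =>
    indicator_nonneg (fun _ _ => zero_le_one) s
  have hB0 : ∀ s, 0 ≤ B s := fun s => Finset.sum_nonneg fun k _ => Finset.sum_nonneg fun i _ =>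
    Finset.sum_nonneg fun b _ => hind k i b s
  have hBsum : ∑ s, B s ≤ A * (n * (2 * d) *
      (exp (-(l * (ε / d))) * exp (l ^ 2 * a ^ 2 / 2) ^ L)) := by
    have hcard : (Fintype.card (Fin d × Bool) : ℝ) ^ N = A := by
      simp [hA, Fintype.card_prod, mul_comm]
    calc ∑ s, B s = ∑ k ∈ Finset.range n, ∑ i : Fin d, ∑ b : Bool, ∑ s,
          indicator (bad k i b) (fun _ => (1 : ℝ)) s := by
          rw [Finset.sum_comm]
          refine Finset.sum_congr rfl fun k _ => ?_
          rw [Finset.sum_comm]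
          refine Finset.sum_congr rfl fun i _ => ?_
          rw [Finset.sum_comm]
      _ ≤ ∑ _k ∈ Finset.range n, ∑ _i : Fin d, ∑ _b : Bool,
          A * (exp (-(l * (ε / d))) * exp (l ^ 2 * a ^ 2 / 2) ^ L) := by
          refine Finset.sum_le_sum fun k _ => Finset.sum_le_sum fun i _ =>
            Finset.sum_le_sum fun b _ => ?_
          rw [← hcard]
          exact sum_indicator_exists_partialSum_sub_le
            (fun p => signedCoord i b (stepVec a p)) (one_le_exp (by positivity)) hl
            (sum_exp_signedCoord_stepVec_le i b a l) L (ε / d) N _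
      _ = _ := by
          simp only [Finset.sum_const, Finset.card_range, Finset.card_univ, Fintype.card_fin,
            Fintype.card_bool, nsmul_eq_mul]
          push_cast
          ring
  have hpt : ∀ s : Fin N → Fin d × Bool,
      |f (polygon x n (samplePath n (pwLin1 x N fun i => stepVec a (s i)).1)) -
        f (pwLin1 x N fun i => stepVec a (s i))| ≤ K * (2 * ε) + M * B s := by
    intro s
    by_cases h : ∃ k < n, ∃ i b, s ∈ bad k i b
    · obtain ⟨k, hk, i, b, hs⟩ := h
      have h1 : 1 ≤ B s := by
        have e : indicator (bad k i b) (fun _ => (1 : ℝ)) s = 1 := indicator_of_mem hs _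
        rw [← e]
        refine le_trans ?_ (Finset.single_le_sum (f := fun k => ∑ i : Fin d, ∑ b : Bool,
          indicator (bad k i b) (fun _ => (1 : ℝ)) s) (fun k _ => Finset.sum_nonneg fun i _ =>
            Finset.sum_nonneg fun b _ => hind k i b s) (Finset.mem_range.2 hk))
        refine le_trans ?_ (Finset.single_le_sum (f := fun i => ∑ b : Bool,
          indicator (bad k i b) (fun _ => (1 : ℝ)) s) (fun i _ =>
            Finset.sum_nonneg fun b _ => hind k i b s) (Finset.mem_univ i))
        exact Finset.single_le_sum (f := fun b => indicator (bad k i b) (fun _ => (1 : ℝ)) s)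
          (fun b _ => hind k i b s) (Finset.mem_univ b)
      have h2 := hM (polygon x n (samplePath n (pwLin1 x N fun i => stepVec a (s i)).1))
        (pwLin1 x N fun i => stepVec a (s i))
      rw [Real.dist_eq] at h2
      have h3 : M ≤ M * B s := le_mul_of_one_le_right hM0 h1
      have h4 : 0 ≤ K * (2 * ε) := by positivity
      linarith
    · have h1 := hf (polygon x n (samplePath n (pwLin1 x N fun i => stepVec a (s i)).1))
        (pwLin1 x N fun i => stepVec a (s i))
      rw [Real.dist_eq] at h1
      have h2 : dist (polygon x n (samplePath n (pwLin1 x N fun i => stepVec a (s i)).1))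
          (pwLin1 x N fun i => stepVec a (s i)) ≤ 2 * ε := by
        refine dist_polygon_samplePath_pwLin1_le x N _ hn hL fun k hk j hj => ?_
        have h3 := norm_le_of_signedCoord_le (r := ε / d)
          (partialSum (fun q => stepVec a (s q)) (⌊(N : ℝ) * k / n⌋₊ + j) -
            partialSum (fun q => stepVec a (s q)) ⌊(N : ℝ) * k / n⌋₊) (fun i b => by
          rw [map_sub, map_partialSum, map_partialSum]
          by_contra! hlt
          exact h ⟨k, hk, i, b, j, hj, hlt.le⟩)
        rwa [mul_div_cancel₀ _ hd'.ne'] at h3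
      have h4 := mul_le_mul_of_nonneg_left h2 hK
      have h5 : 0 ≤ M * B s := mul_nonneg hM0 (hB0 s)
      linarith
  rw [integral_VxaN hd, integral_VxaN hd, ← smul_sub, ← Finset.sum_sub_distrib, smul_eq_mul,
    abs_mul, abs_of_pos (inv_pos.2 hApos)]
  have hcard : ∑ _s : Fin N → Fin d × Bool, K * (2 * ε) = A * (K * (2 * ε)) := by
    simp [hA, Fintype.card_prod, mul_comm]
  have htot : |∑ s : Fin N → Fin d × Bool,
      (f (polygon x n (samplePath n (pwLin1 x N fun i => stepVec a (s i)).1)) -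
        f (pwLin1 x N fun i => stepVec a (s i)))| ≤ A * (K * (2 * ε) +
        M * (n * (2 * d) * (exp (-(l * (ε / d))) * exp (l ^ 2 * a ^ 2 / 2) ^ L))) := by
    refine (Finset.abs_sum_le_sum_abs _ _).trans ((Finset.sum_le_sum fun s _ => hpt s).trans ?_)
    rw [Finset.sum_add_distrib, hcard, ← Finset.mul_sum]
    have := mul_le_mul_of_nonneg_left hBsum hM0
    linarith
  rw [inv_mul_le_iff₀ hApos]
  exact htot

/-! ### Characteristic functions of the finite dimensional distributions -/

lemma abs_prod_sub_prod_le_sum {ι : Type*} (s : Finset ι) (z w : ι → ℝ)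
    (hz : ∀ i ∈ s, |z i| ≤ 1) (hw : ∀ i ∈ s, |w i| ≤ 1) :
    |∏ i ∈ s, z i - ∏ i ∈ s, w i| ≤ ∑ i ∈ s, |z i - w i| := by
  classical
  induction s using Finset.induction_on with
  | empty => simp
  | insert i s hi ih =>
    rw [Finset.prod_insert hi, Finset.prod_insert hi, Finset.sum_insert hi]
    have h1 := ih (fun j hj => hz j (Finset.mem_insert_of_mem hj))
      (fun j hj => hw j (Finset.mem_insert_of_mem hj))
    have h2 : |∏ j ∈ s, w j| ≤ 1 := by
      rw [Finset.abs_prod]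
      exact Finset.prod_le_one (fun _ _ => abs_nonneg _)
        fun j hj => hw j (Finset.mem_insert_of_mem hj)
    have h3 := hz i (Finset.mem_insert_self i s)
    calc |z i * ∏ j ∈ s, z j - w i * ∏ j ∈ s, w j|
        = |(z i - w i) * ∏ j ∈ s, w j + z i * (∏ j ∈ s, z j - ∏ j ∈ s, w j)| := by ring_nf
      _ ≤ |z i - w i| * |∏ j ∈ s, w j| + |z i| * |∏ j ∈ s, z j - ∏ j ∈ s, w j| := by
          rw [← abs_mul, ← abs_mul]; exact abs_add_le _ _
      _ ≤ |z i - w i| * 1 + 1 * ∑ j ∈ s, |z j - w j| := by gcongr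
      _ = _ := by ring

/-- The characteristic function of a lattice step of length `a`. -/
def stepChar {d : ℕ} (a : ℝ) (η : Ed d) : ℝ := (d : ℝ)⁻¹ * ∑ k, cos (a * η k)

lemma abs_stepChar_le_one {d : ℕ} (hd : 1 ≤ d) (a : ℝ) (η : Ed d) : |stepChar a η| ≤ 1 := by
  have hd' : (0 : ℝ) < d := Nat.cast_pos.2 hd
  rw [stepChar, abs_mul, abs_of_pos (inv_pos.2 hd'), inv_mul_le_iff₀ hd', mul_one]
  refine (Finset.abs_sum_le_sum_abs _ _).trans
    ((Finset.sum_le_sum fun k _ => abs_cos_le_one _).trans_eq ?_)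
  simp

lemma abs_stepChar_sub_exp_le {d : ℕ} (hd : 1 ≤ d) (a : ℝ) (η : Ed d) (h : |a| * ‖η‖ ≤ 1) :
    |stepChar a η - exp (-(a ^ 2 / (2 * d) * ‖η‖ ^ 2))| ≤ 2 * (|a| * ‖η‖) ^ 4 := by
  have hd1 : (1 : ℝ) ≤ d := Nat.one_le_cast.2 hd
  have hd' : (0 : ℝ) < d := Nat.cast_pos.2 hd
  set u := |a| * ‖η‖ with hu
  have hu0 : 0 ≤ u := by positivity
  have hu2 : a ^ 2 * ‖η‖ ^ 2 = u ^ 2 := by rw [hu, mul_pow, sq_abs]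
  set q := a ^ 2 / (2 * d) * ‖η‖ ^ 2 with hq
  have hq0 : 0 ≤ q := by positivity
  have hqu : q ≤ u ^ 2 := by
    rw [← hu2, hq, div_mul_eq_mul_div]
    exact div_le_self (by positivity) (by linarith)
  have h1 : |exp (-q) - (1 - q)| ≤ u ^ 4 := by
    have hq1 : |-q| ≤ 1 := by rw [abs_neg, abs_of_nonneg hq0]; nlinarith
    have := abs_exp_sub_one_sub_id_le hq1
    rw [show exp (-q) - (1 - q) = exp (-q) - 1 - -q by ring]
    refine this.trans ?_
    nlinarith
  have h2 : |stepChar a η - (1 - q)| ≤ u ^ 4 := by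
    have e : stepChar a η - (1 - q)
        = (d : ℝ)⁻¹ * ∑ k, (cos (a * η k) - (1 - (a * η k) ^ 2 / 2)) := by
      rw [stepChar, Finset.sum_sub_distrib, Finset.sum_sub_distrib, hq, EuclideanSpace.norm_sq_eq]
      simp only [mul_pow, Real.norm_eq_abs, sq_abs, ← Finset.mul_sum, ← Finset.sum_div,
        Finset.sum_const, Finset.card_univ, Fintype.card_fin, nsmul_eq_mul, mul_one]
      field_simp
    rw [e, abs_mul, abs_of_pos (inv_pos.2 hd'), inv_mul_le_iff₀ hd']
    refine (Finset.abs_sum_le_sum_abs _ _).trans ?_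
    calc ∑ k, |cos (a * η k) - (1 - (a * η k) ^ 2 / 2)| ≤ ∑ _k : Fin d, u ^ 4 := by
          refine Finset.sum_le_sum fun k _ => ?_
          have hk : |a * η k| ≤ u := by
            rw [abs_mul, hu, ← Real.norm_eq_abs (η k)]
            exact mul_le_mul_of_nonneg_left (PiLp.norm_apply_le η k) (abs_nonneg a)
          refine (cos_bound (hk.trans h)).trans ?_
          have : |a * η k| ^ 4 ≤ u ^ 4 := pow_le_pow_left₀ (abs_nonneg _) hk 4
          nlinarith [pow_nonneg (abs_nonneg (a * η k)) 4]
      _ = d * u ^ 4 := by simp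
  calc |stepChar a η - exp (-q)| = |(stepChar a η - (1 - q)) - (exp (-q) - (1 - q))| := by ring_nf
    _ ≤ |stepChar a η - (1 - q)| + |exp (-q) - (1 - q)| := abs_sub _ _
    _ ≤ 2 * u ^ 4 := by linarith

lemma sum_exp_inner_stepVec {d : ℕ} (hd : 1 ≤ d) (a : ℝ) (η : Ed d) :
    ∑ p : Fin d × Bool, Complex.exp (Complex.I * ((⟪η, stepVec a p⟫ : ℝ) : ℂ))
      = (((2 * d : ℕ) : ℝ) * stepChar a η : ℝ) := by
  have hd' : (d : ℝ) ≠ 0 := (Nat.cast_pos.2 hd).ne'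
  rw [Fintype.sum_prod_type, stepChar]
  have e : ((2 * d : ℕ) : ℝ) * ((d : ℝ)⁻¹ * ∑ k, cos (a * η k)) = ∑ k, 2 * cos (a * η k) := by
    rw [← Finset.mul_sum]
    push_cast
    field_simp
  rw [e, Complex.ofReal_sum]
  refine Finset.sum_congr rfl fun k _ => ?_
  rw [Fintype.sum_bool]
  simp only [stepVec, if_true, Bool.false_eq_true, if_false, inner_smul_right,
    EuclideanSpace.inner_single_right, conj_trivial, one_mul]
  push_cast
  rw [Complex.cos]
  ring_nf

lemma evalAt_pwLin1 {d : ℕ} (x : Ed d) (N : ℕ) (v : Fin N → Ed d) {t : ℝ} (ht : t ∈ Icc (0 : ℝ) 1) :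
    evalAt (pwLin1 x N v).1 t = x + ∑ i : Fin N, clamp01 (N * t - ((i : ℕ) : ℝ)) • v i := by
  rw [show evalAt (pwLin1 x N v).1 t = (pwLin1 x N v).1 ⟨t, ht⟩ from evalAt_of_mem _ ⟨t, ht⟩]
  rfl

lemma succ_div_mem_Icc {n : ℕ} (j : Fin n) : (((j : ℕ) + 1 : ℕ) : ℝ) / n ∈ Icc (0 : ℝ) 1 := by
  have hn : (0 : ℝ) < n := Nat.cast_pos.2 j.pos
  exact ⟨by positivity, (div_le_one hn).2 (by exact_mod_cast j.isLt)⟩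

/-- The dual vector paired with the `i`-th step of an `N`-step walk when the positions at the times
`1/n, …, 1` are paired with `ξ`. -/
def stepDual {d n : ℕ} (N : ℕ) (ξ : Fin n → Ed d) (i : Fin N) : Ed d :=
  ∑ j : Fin n, clamp01 (N * ((((j : ℕ) + 1 : ℕ) : ℝ) / n) - ((i : ℕ) : ℝ)) • ξ j

lemma sum_inner_samplePath_pwLin1 {d n : ℕ} (x : Ed d) (N : ℕ) (v : Fin N → Ed d)
    (ξ : Fin n → Ed d) :
    ∑ j, ⟪ξ j, samplePath n (pwLin1 x N v).1 j⟫
      = ⟪∑ j, ξ j, x⟫ + ∑ i : Fin N, ⟪stepDual N ξ i, v i⟫ := by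
  simp only [samplePath, evalAt_pwLin1 x N v (succ_div_mem_Icc _), inner_add_right, stepDual,
    Finset.sum_add_distrib, sum_inner, inner_sum, inner_smul_left, inner_smul_right]
  rw [Finset.sum_comm]
  simp

lemma integral_exp_samplePath_VxaN {d n : ℕ} (hd : 1 ≤ d) (x : Ed d) (a : ℝ) (N : ℕ)
    (ξ : Fin n → Ed d) :
    ∫ ω : Omega1 x, Complex.exp (Complex.I *
        ((∑ j, ⟪ξ j, samplePath n ω.1 j⟫ : ℝ) : ℂ)) ∂(VxaN x a N)
      = Complex.exp (Complex.I * ((⟪∑ j, ξ j, x⟫ : ℝ) : ℂ)) *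
        ((∏ i : Fin N, stepChar a (stepDual N ξ i) : ℝ) : ℂ) := by
  have h0 : ((2 * d : ℕ) : ℝ) ≠ 0 := Nat.cast_ne_zero.2 (by omega)
  rw [integral_VxaN hd]
  simp only [sum_inner_samplePath_pwLin1, Complex.ofReal_add, Complex.ofReal_sum, mul_add,
    Complex.exp_add, Finset.mul_sum, Complex.exp_sum]
  rw [← Finset.mul_sum, ← Fintype.prod_sum
    fun (i : Fin N) p => Complex.exp (Complex.I * ((⟪stepDual N ξ i, stepVec a p⟫ : ℝ) : ℂ))]
  simp only [sum_exp_inner_stepVec hd]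
  rw [← Complex.ofReal_prod, Finset.prod_mul_distrib, Finset.prod_const, Finset.card_univ,
    Fintype.card_fin, Complex.real_smul, mul_left_comm, ← Complex.ofReal_mul, ← mul_assoc,
    inv_mul_cancel₀ (pow_ne_zero N h0), one_mul]

lemma clamp01_nonneg (r : ℝ) : 0 ≤ clamp01 r := le_min zero_le_one (le_max_left _ _)

lemma clamp01_le_one (r : ℝ) : clamp01 r ≤ 1 := min_le_left _ _

lemma sum_clamp01 (N : ℕ) (y : ℝ) :
    ∑ i : Fin N, clamp01 (y - ((i : ℕ) : ℝ)) = min (N : ℝ) (max 0 y) := by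
  induction N with
  | zero => simp
  | succ N ih =>
    rw [Fin.sum_univ_castSucc]
    simp only [Fin.val_castSucc, Fin.val_last]
    rw [ih, clamp01]
    have hN : (0 : ℝ) ≤ N := Nat.cast_nonneg N
    push_cast
    rcases le_total y N with h | h
    · rw [max_eq_left (by linarith : y - N ≤ 0), min_eq_right (max_le hN h),
        min_eq_right (max_le (by linarith) (by linarith : y ≤ N + 1)),
        min_eq_right zero_le_one, add_zero]
    · rw [max_eq_right (hN.trans h), max_eq_right (by linarith : 0 ≤ y - N), min_eq_left h]
      rcases le_total y (N + 1) with h' | h'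
      · rw [min_eq_right h', min_eq_right (by linarith)]; ring
      · rw [min_eq_left h', min_eq_left (by linarith)]

lemma abs_sum_clamp01_mul_sub_min_le (N : ℕ) {y z : ℝ} (hy : 0 ≤ y) (hyN : y ≤ N) (hz : 0 ≤ z)
    (hzN : z ≤ N) :
    |∑ i : Fin N, clamp01 (y - ((i : ℕ) : ℝ)) * clamp01 (z - ((i : ℕ) : ℝ)) - min y z| ≤ 1 := by
  wlog hyz : y ≤ z generalizing y z
  · have := this hz hzN hy hyN (le_of_not_ge hyz)
    rw [min_comm]
    simpa only [mul_comm] using this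
  rw [min_eq_left hyz]
  have h1 : ∑ i : Fin N, clamp01 (y - ((i : ℕ) : ℝ)) = y := by
    rw [sum_clamp01, max_eq_right hy, min_eq_right hyN]
  have h2 : y - 1 ≤ ∑ i : Fin N, clamp01 (y - 1 - ((i : ℕ) : ℝ)) := by
    rw [sum_clamp01]
    exact le_min (by linarith) (le_max_right _ _)
  have h3 : ∑ i : Fin N, clamp01 (y - 1 - ((i : ℕ) : ℝ)) ≤
      ∑ i : Fin N, clamp01 (y - ((i : ℕ) : ℝ)) * clamp01 (z - ((i : ℕ) : ℝ)) := by
    refine Finset.sum_le_sum fun i _ => ?_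
    rcases le_total (y - 1 - ((i : ℕ) : ℝ)) 0 with h | h
    · rw [clamp01_of_nonpos h]
      exact mul_nonneg (clamp01_nonneg _) (clamp01_nonneg _)
    · rw [clamp01_of_one_le (r := y - (i : ℕ)) (by linarith),
        clamp01_of_one_le (r := z - (i : ℕ)) (by linarith), one_mul]
      exact clamp01_le_one _
  have h4 : ∑ i : Fin N, clamp01 (y - ((i : ℕ) : ℝ)) * clamp01 (z - ((i : ℕ) : ℝ)) ≤ y := by
    rw [← h1]
    refine (Finset.sum_le_sum fun i _ =>
      mul_le_of_le_one_right (clamp01_nonneg _) (clamp01_le_one _)).trans_eq ?_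
    rw [h1, h1]
  rw [abs_le]
  constructor <;> linarith

lemma norm_stepDual_le {d n : ℕ} (N : ℕ) (ξ : Fin n → Ed d) (i : Fin N) :
    ‖stepDual N ξ i‖ ≤ ∑ j, ‖ξ j‖ := by
  refine (norm_sum_le _ _).trans (Finset.sum_le_sum fun j _ => ?_)
  rw [norm_smul, Real.norm_of_nonneg (clamp01_nonneg _)]
  exact mul_le_of_le_one_left (norm_nonneg _) (clamp01_le_one _)

lemma sum_norm_sq_stepDual {d n : ℕ} (N : ℕ) (ξ : Fin n → Ed d) :
    ∑ i : Fin N, ‖stepDual N ξ i‖ ^ 2 = ∑ j : Fin n, ∑ k : Fin n,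
      (∑ i : Fin N, clamp01 (N * ((((j : ℕ) + 1 : ℕ) : ℝ) / n) - ((i : ℕ) : ℝ)) *
        clamp01 (N * ((((k : ℕ) + 1 : ℕ) : ℝ) / n) - ((i : ℕ) : ℝ))) * ⟪ξ j, ξ k⟫ := by
  simp only [← real_inner_self_eq_norm_sq, stepDual, sum_inner, inner_sum, Finset.sum_mul]
  rw [Finset.sum_comm]
  refine Finset.sum_congr rfl fun j _ => ?_
  rw [Finset.sum_comm]
  refine Finset.sum_congr rfl fun k _ => Finset.sum_congr rfl fun i _ => ?_
  rw [real_inner_smul_left, real_inner_smul_right, real_inner_comm (ξ j) (ξ k)]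
  ring

lemma sum_norm_sq_sum_Ici {d n : ℕ} (ξ : Fin n → Ed d) :
    ∑ i : Fin n, (1 / n : ℝ) * ‖∑ j ∈ Finset.Ici i, ξ j‖ ^ 2
      = ∑ j : Fin n, ∑ k : Fin n,
        min ((((j : ℕ) + 1 : ℕ) : ℝ) / n) ((((k : ℕ) + 1 : ℕ) : ℝ) / n) * ⟪ξ j, ξ k⟫ := by
  have h1 : ∀ i : Fin n, (1 / n : ℝ) * ‖∑ j ∈ Finset.Ici i, ξ j‖ ^ 2 =
      ∑ j : Fin n, ∑ k : Fin n, (if i ≤ min j k then (1 / n : ℝ) else 0) * ⟪ξ j, ξ k⟫ := by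
    intro i
    have e : Finset.Ici i = Finset.univ.filter fun j => i ≤ j := by ext; simp
    rw [← real_inner_self_eq_norm_sq, e, Finset.sum_filter, sum_inner, Finset.mul_sum]
    refine Finset.sum_congr rfl fun j _ => ?_
    rw [inner_sum, Finset.mul_sum]
    refine Finset.sum_congr rfl fun k _ => ?_
    by_cases hj : i ≤ j <;> by_cases hk : i ≤ k <;> simp [hj, hk]
  simp only [h1]
  rw [Finset.sum_comm]
  refine Finset.sum_congr rfl fun j _ => ?_
  rw [Finset.sum_comm]
  refine Finset.sum_congr rfl fun k _ => ?_
  rw [← Finset.sum_mul, ← Finset.sum_filter]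
  congr 1
  have e : (Finset.univ.filter fun i : Fin n => i ≤ min j k) = Finset.Iic (min j k) := by
    ext; simp
  rw [e, Finset.sum_const, Fin.card_Iic, nsmul_eq_mul, mul_one_div]
  rcases le_total j k with h | h
  · rw [min_eq_left h, min_eq_left]
    gcongr
    exact h
  · rw [min_eq_right h, min_eq_right]
    gcongr
    exact h

lemma tendsto_sum_norm_sq_stepDual {d n : ℕ} {a : ℕ → ℝ} {N : ℕ → ℕ} {t : ℝ}
    (ha : Tendsto a atTop (𝓝 0)) (hN : Tendsto (fun k => a k ^ 2 * N k / d) atTop (𝓝 t))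
    (ξ : Fin n → Ed d) :
    Tendsto (fun k => ∑ i : Fin (N k), a k ^ 2 / (2 * d) * ‖stepDual (N k) ξ i‖ ^ 2) atTop
      (𝓝 (t / 2 * ∑ i : Fin n, (1 / n : ℝ) * ‖∑ j ∈ Finset.Ici i, ξ j‖ ^ 2)) := by
  rw [sum_norm_sq_sum_Ici]
  simp only [← Finset.mul_sum, sum_norm_sq_stepDual]
  rw [Finset.mul_sum]
  simp_rw [Finset.mul_sum (s := Finset.univ (α := Fin n)), ← mul_assoc]
  refine tendsto_finsetSum _ fun j _ => tendsto_finsetSum _ fun k _ => Tendsto.mul_const _ ?_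
  set p : ℝ := (((j : ℕ) + 1 : ℕ) : ℝ) / n with hp
  set q : ℝ := (((k : ℕ) + 1 : ℕ) : ℝ) / n with hq
  have hpI : p ∈ Icc (0 : ℝ) 1 := succ_div_mem_Icc j
  have hqI : q ∈ Icc (0 : ℝ) 1 := succ_div_mem_Icc k
  have ha2 : Tendsto (fun m => a m ^ 2 / (2 * d)) atTop (𝓝 0) := by
    simpa using (ha.pow 2).div_const (2 * (d : ℝ))
  have hmain : Tendsto (fun m => a m ^ 2 * N m / d / 2 * min p q) atTop (𝓝 (t / 2 * min p q)) :=
    (hN.div_const 2).mul_const _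
  refine tendsto_of_tendsto_of_dist hmain (squeeze_zero (fun _ => dist_nonneg) (fun m => ?_) ha2)
  have hNm : (0 : ℝ) ≤ N m := Nat.cast_nonneg _
  have hb := abs_sum_clamp01_mul_sub_min_le (N m) (y := N m * p) (z := N m * q)
    (mul_nonneg hNm hpI.1) (mul_le_of_le_one_right hNm hpI.2)
    (mul_nonneg hNm hqI.1) (mul_le_of_le_one_right hNm hqI.2)
  rw [← mul_min_of_nonneg _ _ hNm] at hb
  rw [dist_comm, Real.dist_eq, show a m ^ 2 * N m / d / 2 * min p q
    = a m ^ 2 / (2 * d) * (N m * min p q) by ring, ← mul_sub, abs_mul,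
    abs_of_nonneg (by positivity)]
  exact mul_le_of_le_one_right (by positivity) hb

lemma tendsto_prod_stepChar {d n : ℕ} (hd : 1 ≤ d) {a : ℕ → ℝ} {N : ℕ → ℕ} {t : ℝ}
    (ha : Tendsto a atTop (𝓝 0)) (hN : Tendsto (fun k => a k ^ 2 * N k / d) atTop (𝓝 t))
    (ξ : Fin n → Ed d) :
    Tendsto (fun k => ∏ i : Fin (N k), stepChar (a k) (stepDual (N k) ξ i)) atTop
      (𝓝 (exp (-(t / 2 * ∑ i : Fin n, (1 / n : ℝ) * ‖∑ j ∈ Finset.Ici i, ξ j‖ ^ 2)))) := by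
  set R := ∑ j, ‖ξ j‖ with hR
  have hR0 : 0 ≤ R := Finset.sum_nonneg fun _ _ => norm_nonneg _
  have hd' : (0 : ℝ) < d := Nat.cast_pos.2 hd
  have hmain := (continuous_exp.tendsto _).comp (tendsto_sum_norm_sq_stepDual ha hN ξ).neg
  have herr : Tendsto (fun k => 2 * d * R ^ 4 * (a k ^ 2 * N k / d) * a k ^ 2) atTop (𝓝 0) := by
    simpa using (hN.const_mul (2 * d * R ^ 4)).mul (ha.pow 2)
  refine tendsto_of_tendsto_of_dist hmain ?_
  have hsmall : ∀ᶠ k in atTop, |a k| * R ≤ 1 := by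
    have : Tendsto (fun k => |a k| * R) atTop (𝓝 0) := by simpa using ha.abs.mul_const R
    exact this.eventually_le_const zero_lt_one
  refine squeeze_zero' (Eventually.of_forall fun _ => dist_nonneg) ?_ herr
  filter_upwards [hsmall] with k hk
  rw [dist_comm, Real.dist_eq, Function.comp_apply, ← Finset.sum_neg_distrib, exp_sum]
  refine (abs_prod_sub_prod_le_sum _ _ _ (fun i _ => abs_stepChar_le_one hd _ _)
    fun i _ => ?_).trans ?_
  · rw [abs_of_pos (exp_pos _), exp_le_one_iff, neg_nonpos]
    positivity
  · calc _ ≤ ∑ _i : Fin (N k), 2 * (|a k| * R) ^ 4 := by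
          refine Finset.sum_le_sum fun i _ => ?_
          have h1 : |a k| * ‖stepDual (N k) ξ i‖ ≤ |a k| * R :=
            mul_le_mul_of_nonneg_left (norm_stepDual_le _ _ _) (abs_nonneg _)
          refine (abs_stepChar_sub_exp_le hd _ _ (h1.trans hk)).trans ?_
          gcongr
      _ = _ := by
          rw [Finset.sum_const, Finset.card_univ, Fintype.card_fin, nsmul_eq_mul, mul_pow,
            show |a k| ^ 4 = a k ^ 2 * a k ^ 2 by rw [← sq_abs (a k)]; ring]
          field_simp

/-! ### Convergence of the lattice walk to Brownian motion -/

lemma tendsto_integral_samplePath {d : ℕ} (hd : 1 ≤ d) {x : Ed d} {Wt : ℝ → Measure (Omega1 x)}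
    (hWt : IsWienerFamily x Wt) {a : ℕ → ℝ} {N : ℕ → ℕ} {t : ℝ} (ht : 0 < t)
    (ha : Tendsto a atTop (𝓝 0)) (hN : Tendsto (fun k => a k ^ 2 * N k / d) atTop (𝓝 t))
    (n : ℕ) (h : BoundedContinuousFunction (Fin n → Ed d) ℝ) :
    Tendsto (fun k => ∫ ω, h (samplePath n ω.1) ∂(VxaN x (a k) (N k))) atTop
      (𝓝 (∫ ω, h (samplePath n ω.1) ∂(Wt t))) := by
  obtain ⟨hprob, hchar⟩ := hWt t ht
  have hV := fun k => isProbabilityMeasure_VxaN hd x (a k) (N k)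
  let T : Omega1 x → PiLp 2 (fun _ : Fin n => Ed d) := fun ω => WithLp.toLp 2 (samplePath n ω.1)
  have hTc : Continuous T :=
    (PiLp.continuous_toLp 2 _).comp ((continuous_samplePath n).comp continuous_subtype_val)
  have hT {μ : Measure (Omega1 x)} : AEMeasurable T μ := hTc.measurable.aemeasurable
  let μ : ℕ → ProbabilityMeasure (PiLp 2 (fun _ : Fin n => Ed d)) := fun k =>
    ⟨(VxaN x (a k) (N k)).map T, Measure.isProbabilityMeasure_map hT⟩
  let μ₀ : ProbabilityMeasure (PiLp 2 (fun _ : Fin n => Ed d)) :=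
    ⟨(Wt t).map T, Measure.isProbabilityMeasure_map hT⟩
  have hcf : ∀ (ν : Measure (Omega1 x)) (ξ : PiLp 2 (fun _ : Fin n => Ed d)),
      charFun (ν.map T) ξ = ∫ ω : Omega1 x, Complex.exp (Complex.I *
        ((∑ j, ⟪ξ j, samplePath n ω.1 j⟫ : ℝ) : ℂ)) ∂ν := by
    intro ν ξ
    rw [charFun_apply, integral_map hT (by fun_prop)]
    refine integral_congr_ae (Eventually.of_forall fun ω => ?_)
    simp only [T, PiLp.inner_apply]
    rw [mul_comm]
    simp only [real_inner_comm]
  have hlim : Tendsto μ atTop (𝓝 μ₀) := by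
    refine ProbabilityMeasure.tendsto_iff_tendsto_charFun.2 fun ξ => ?_
    have hW := hchar n (fun i => (i : ℝ) / n) (by simp) (fun i hi => by
      have : (0 : ℝ) < n := Nat.cast_pos.2 (by omega)
      push_cast
      gcongr
      linarith) (div_self_le_one _) (fun j => ξ j)
    have hW' : charFun ((Wt t).map T) ξ =
        Complex.exp (Complex.I * ((⟪∑ j, ξ j, x⟫ : ℝ) : ℂ)) *
        ((exp (-(t / 2 * ∑ i : Fin n, (1 / n : ℝ) * ‖∑ j ∈ Finset.Ici i, ξ j‖ ^ 2)) : ℝ) : ℂ) := by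
      rw [hcf]
      refine hW.trans ?_
      rw [Complex.exp_add, mul_comm, Complex.ofReal_exp, neg_mul]
      congr 5
      refine Finset.sum_congr rfl fun i _ => ?_
      push_cast
      ring
    change Tendsto (fun k => charFun ((VxaN x (a k) (N k)).map T) ξ) atTop
      (𝓝 (charFun ((Wt t).map T) ξ))
    rw [hW']
    simp only [hcf, integral_exp_samplePath_VxaN hd]
    exact ((Complex.continuous_ofReal.tendsto _).comp
      (tendsto_prod_stepChar hd ha hN fun j => ξ j)).const_mul _
  have := ProbabilityMeasure.tendsto_iff_forall_integral_tendsto.1 hlim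
    (h.compContinuous ⟨WithLp.ofLp, PiLp.continuous_ofLp 2 _⟩)
  have hmap : ∀ ν : Measure (Omega1 x), ∫ y, h (WithLp.ofLp y) ∂(ν.map T)
      = ∫ ω, h (samplePath n ω.1) ∂ν := fun ν =>
    integral_map hT (h.continuous.comp (PiLp.continuous_ofLp 2 _)).aestronglyMeasurable
  simp only [← hmap]
  exact this

lemma tendsto_nat_mul_exp_neg_sqrt_mul {c : ℝ} (hc : 0 < c) :
    Tendsto (fun n : ℕ => (n : ℝ) * exp (-(√n * c))) atTop (𝓝 0) := by
  have h1 : Tendsto (fun n : ℕ => √n * c) atTop atTop :=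
    (tendsto_sqrt_atTop.comp tendsto_natCast_atTop_atTop).atTop_mul_const hc
  have h2 := ((tendsto_pow_mul_exp_neg_atTop_nhds_zero 2).comp h1).const_mul (c ^ 2)⁻¹
  rw [mul_zero] at h2
  refine h2.congr fun n => ?_
  simp only [Function.comp_apply, mul_pow, Real.sq_sqrt (Nat.cast_nonneg n)]
  field_simp

/-- **Donsker's theorem** for the simple random walk, with bounded Lipschitz test functions. -/
lemma tendsto_integral_VxaN_of_lipschitz {d : ℕ} (hd : 1 ≤ d) {x : Ed d}
    {Wt : ℝ → Measure (Omega1 x)} (hWt : IsWienerFamily x Wt) {a : ℕ → ℝ} {N : ℕ → ℕ} {t : ℝ}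
    (ht : 0 < t) (ha : Tendsto a atTop (𝓝 0))
    (hN : Tendsto (fun k => a k ^ 2 * N k / d) atTop (𝓝 t)) {f : Omega1 x → ℝ} {M K : ℝ}
    (hM : ∀ ω ω', dist (f ω) (f ω') ≤ M) (hK : 0 ≤ K)
    (hf : ∀ ω ω', dist (f ω) (f ω') ≤ K * dist ω ω') :
    Tendsto (fun k => ∫ ω, f ω ∂(VxaN x (a k) (N k))) atTop (𝓝 (∫ ω, f ω ∂(Wt t))) := by
  have hprob := (hWt t ht).1
  have hd' : (0 : ℝ) < d := Nat.cast_pos.2 hd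
  have hfc : Continuous f := by
    lift K to NNReal using hK
    exact (LipschitzWith.of_dist_le_mul hf).continuous
  have hM0 : 0 ≤ M := dist_nonneg.trans (hM (pwLin1 x 0 0) (pwLin1 x 0 0))
  have hpoly : ∀ n, Tendsto
      (fun k => ∫ ω, f (polygon x n (samplePath n ω.1)) ∂(VxaN x (a k) (N k))) atTop
      (𝓝 (∫ ω, f (polygon x n (samplePath n ω.1)) ∂(Wt t))) := fun n =>
    tendsto_integral_samplePath hd hWt ht ha hN n
      (BoundedContinuousFunction.mkOfBound ⟨_, hfc.comp (continuous_polygon x n)⟩ M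
        fun _ _ => hM _ _)
  have hW : Tendsto (fun n : ℕ => ∫ ω, f (polygon x n (samplePath n ω.1)) ∂(Wt t)) atTop
      (𝓝 (∫ ω, f ω ∂(Wt t))) := by
    refine tendsto_integral_of_dominated_convergence (fun _ => |f (pwLin1 x 0 0)| + M)
      (fun n => ?_) (integrable_const _) (fun n => Eventually.of_forall fun ω => ?_)
      (Eventually.of_forall fun ω => (hfc.tendsto _).comp (tendsto_polygon_samplePath ω))
    · exact (hfc.comp ((continuous_polygon x n).comp
        ((continuous_samplePath n).comp continuous_subtype_val))).aestronglyMeasurable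
    · have := hM (polygon x n (samplePath n ω.1)) (pwLin1 x 0 0)
      rw [Real.dist_eq] at this
      rw [Real.norm_eq_abs]
      linarith [abs_sub_abs_le_abs_sub (f (polygon x n (samplePath n ω.1))) (f (pwLin1 x 0 0))]
  refine Metric.tendsto_nhds.2 fun η hη => ?_
  obtain ⟨ε, hε, hKε⟩ : ∃ ε : ℝ, 0 < ε ∧ K * (2 * ε) ≤ η / 4 :=
    ⟨η / (8 * (K + 1)), by positivity, by
      rw [← sub_nonneg]
      have : η / 4 - K * (2 * (η / (8 * (K + 1)))) = η / (4 * (K + 1)) := by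
        field_simp
        ring
      rw [this]
      positivity⟩
  have hsmall : Tendsto (fun n : ℕ =>
      M * (2 * d) * exp (t * d / 2 + 1) * (n * exp (-(√n * (ε / d))))) atTop (𝓝 0) := by
    simpa using (tendsto_nat_mul_exp_neg_sqrt_mul (div_pos hε hd')).const_mul
      (M * (2 * d) * exp (t * d / 2 + 1))
  obtain ⟨n, hn0, hnW, hnε⟩ := ((eventually_gt_atTop 0).and
    ((Metric.tendsto_nhds.1 hW (η / 4) (by positivity)).and
      (hsmall.eventually_lt_const (by positivity : (0 : ℝ) < η / 4)))).exists
  have hexp : ∀ᶠ k in atTop, (a k ^ 2 * N k + 3 * n * a k ^ 2) / 2 ≤ t * d / 2 + 1 := by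
    have : Tendsto (fun k => (a k ^ 2 * N k / d * d + 3 * n * a k ^ 2) / 2) atTop
        (𝓝 ((t * d + 3 * n * 0 ^ 2) / 2)) :=
      ((hN.mul_const _).add ((ha.pow 2).const_mul _)).div_const 2
    filter_upwards [this.eventually_le_const (show _ < t * d / 2 + 1 by norm_num)]
      with k hk
    rwa [div_mul_cancel₀ _ hd'.ne'] at hk
  filter_upwards [hexp, Metric.tendsto_nhds.1 (hpoly n) (η / 4) (by positivity)] with k hk hkn
  have hn' : (0 : ℝ) < n := Nat.cast_pos.2 hn0
  have hL : (N k : ℝ) / n + 2 ≤ ((⌈(N k : ℝ) / n⌉₊ + 2 : ℕ) : ℝ) := by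
    push_cast
    gcongr
    exact Nat.le_ceil _
  have hL' : ((⌈(N k : ℝ) / n⌉₊ + 2 : ℕ) : ℝ) ≤ N k / n + 3 := by
    push_cast
    linarith [Nat.ceil_lt_add_one (show (0 : ℝ) ≤ N k / n by positivity)]
  have hb := abs_integral_polygon_sub_le hd x (a k) (N k) hn0 hL hε.le (Real.sqrt_nonneg n) hK f
    hM hf
  have hpow : exp (√n ^ 2 * a k ^ 2 / 2) ^ (⌈(N k : ℝ) / n⌉₊ + 2) ≤ exp (t * d / 2 + 1) := by
    rw [← Real.exp_nat_mul, Real.exp_le_exp, Real.sq_sqrt hn'.le]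
    calc _ ≤ ((N k : ℝ) / n + 3) * (n * a k ^ 2 / 2) := by gcongr
      _ = (a k ^ 2 * N k + 3 * n * a k ^ 2) / 2 := by field_simp
      _ ≤ _ := hk
  have hb' : M * (n * (2 * d) * (exp (-(√n * (ε / d))) *
      exp (√n ^ 2 * a k ^ 2 / 2) ^ (⌈(N k : ℝ) / n⌉₊ + 2))) < η / 4 := by
    refine lt_of_le_of_lt ?_ hnε
    calc _ ≤ M * (n * (2 * d) * (exp (-(√n * (ε / d))) * exp (t * d / 2 + 1))) := by gcongr
      _ = _ := by ring
  rw [Real.dist_eq] at hnW hkn ⊢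
  rw [abs_lt] at hnW hkn ⊢
  rw [abs_le] at hb
  constructor <;> linarith [hb.1, hb.2, hnW.1, hnW.2, hkn.1, hkn.2]

/-- **Donsker's theorem** for the simple random walk on a lattice with vanishing spacing. -/
theorem tendsto_integral_VxaN {d : ℕ} (hd : 1 ≤ d) {x : Ed d}
    {Wt : ℝ → Measure (Omega1 x)} (hWt : IsWienerFamily x Wt) {a : ℕ → ℝ} {N : ℕ → ℕ} {t : ℝ}
    (ht : 0 < t) (ha : Tendsto a atTop (𝓝 0))
    (hN : Tendsto (fun k => a k ^ 2 * N k / d) atTop (𝓝 t))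
    (f : BoundedContinuousFunction (Omega1 x) ℝ) :
    Tendsto (fun k => ∫ ω, f ω ∂(VxaN x (a k) (N k))) atTop (𝓝 (∫ ω, f ω ∂(Wt t))) := by
  let μ : ℕ → ProbabilityMeasure (Omega1 x) := fun k =>
    ⟨VxaN x (a k) (N k), isProbabilityMeasure_VxaN hd x (a k) (N k)⟩
  let μ₀ : ProbabilityMeasure (Omega1 x) := ⟨Wt t, (hWt t ht).1⟩
  have hlim : Tendsto μ atTop (𝓝 μ₀) := by
    refine tendsto_iff_forall_lipschitz_integral_tendsto.2 ?_
    rintro g ⟨M, hM⟩ ⟨K, hK⟩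
    exact tendsto_integral_VxaN_of_lipschitz hd hWt ht ha hN hM K.2 hK.dist_le_mul
  exact ProbabilityMeasure.tendsto_iff_forall_integral_tendsto.1 hlim f

/-! ### Geometrically distributed number of steps -/

lemma mem_Ico_natCast_mul_iff_floor_div_eq {h : ℝ} (hh : 0 < h) {t : ℝ} (ht : 0 ≤ t) (N : ℕ) :
    t ∈ Ico (N * h) ((N + 1) * h) ↔ ⌊t / h⌋₊ = N := by
  rw [Nat.floor_eq_iff (div_nonneg ht hh.le), le_div_iff₀ hh, div_lt_iff₀ hh, mem_Ico]

lemma integrableOn_exp_neg_mul_mul_floor {c h C : ℝ} (hc : 0 < c) {G : ℕ → ℝ}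
    (hG : ∀ N, |G N| ≤ C) :
    IntegrableOn (fun t => c * exp (-(c * t)) * G ⌊t / h⌋₊) (Ioi 0) := by
  have hexp : IntegrableOn (fun t => c * exp (-(c * t))) (Ioi 0) := by
    have := (exp_neg_integrableOn_Ioi 0 hc).const_mul c
    simp only [neg_mul] at this
    exact this
  refine Integrable.mul_bdd (c := C) hexp ?_ (Eventually.of_forall fun t => hG _)
  exact ((measurable_of_countable G).comp
    (Nat.measurable_floor.comp (measurable_id.div_const h))).aestronglyMeasurable

lemma setIntegral_Ico_exp_neg_mul (c : ℝ) {u v : ℝ} (huv : u ≤ v) :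
    ∫ t in Ico u v, c * exp (-(c * t)) = exp (-(c * u)) - exp (-(c * v)) := by
  rw [integral_Ico_eq_integral_Ioc, ← intervalIntegral.integral_of_le huv,
    intervalIntegral.integral_eq_sub_of_hasDerivAt (f := fun t => -exp (-(c * t)))
      (fun t _ => ?_) (Continuous.intervalIntegrable (by fun_prop) _ _)]
  · ring
  · have := ((hasDerivAt_id t).const_mul c).fun_neg.exp.fun_neg
    simp only [id, mul_one, mul_neg, neg_neg] at this
    rwa [mul_comm c]

/-- A geometric average as an average against the exponential distribution. -/
lemma hasSum_integral_exp_neg_mul_floor {c h C : ℝ} (hc : 0 < c) (hh : 0 < h) {G : ℕ → ℝ}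
    (hG : ∀ N, |G N| ≤ C) :
    HasSum (fun N : ℕ => (1 - exp (-(c * h))) * (exp (-(c * (h * N))) * G N))
      (∫ t in Ioi (0 : ℝ), c * exp (-(c * t)) * G ⌊t / h⌋₊) := by
  have hpos : ∀ N : ℕ, ∀ t ∈ Ico (N * h) ((N + 1) * h), 0 ≤ t := fun N t ht =>
    le_trans (by positivity) ht.1
  have hU : ⋃ N : ℕ, Ico (N * h) ((N + 1) * h) = Ici 0 := by
    ext t
    simp only [mem_iUnion, mem_Ici]
    exact ⟨fun ⟨N, hN⟩ => hpos N t hN, fun ht =>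
      ⟨_, (mem_Ico_natCast_mul_iff_floor_div_eq hh ht _).2 rfl⟩⟩
  have hdisj : Pairwise (Function.onFun Disjoint fun N : ℕ => Ico (N * h) ((N + 1) * h)) :=
    fun N N' hNN' => Set.disjoint_left.2 fun t ht ht' => hNN' <| by
      have h0 := hpos N t ht
      exact ((mem_Ico_natCast_mul_iff_floor_div_eq hh h0 N).1 ht).symm.trans
        ((mem_Ico_natCast_mul_iff_floor_div_eq hh h0 N').1 ht')
  have hinteg := integrableOn_exp_neg_mul_mul_floor (h := h) hc hG
  rw [← integrableOn_Ici_iff_integrableOn_Ioi, ← hU] at hinteg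
  rw [← integral_Ici_eq_integral_Ioi, ← hU]
  refine (hasSum_integral_iUnion (fun _ => measurableSet_Ico) hdisj hinteg).congr_fun fun N => ?_
  have : ∫ t in Ico (N * h) ((N + 1) * h), c * exp (-(c * t)) * G ⌊t / h⌋₊ =
      ∫ t in Ico (N * h) ((N + 1) * h), c * exp (-(c * t)) * G N :=
    setIntegral_congr_fun measurableSet_Ico fun t ht => by
      simp only [(mem_Ico_natCast_mul_iff_floor_div_eq hh (hpos N t ht) N).1 ht]
  rw [this, integral_mul_const, setIntegral_Ico_exp_neg_mul _ (by gcongr; linarith),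
    show -(c * ((N + 1) * h)) = -(c * h) + -(c * (h * N)) by ring, exp_add,
    show c * (N * h) = c * (h * N) by ring]
  ring

lemma abs_integral_VxaN_le {d : ℕ} (hd : 1 ≤ d) {x : Ed d}
    (f : BoundedContinuousFunction (Omega1 x) ℝ) (a : ℝ) (N : ℕ) :
    |∫ ω, f ω ∂(VxaN x a N)| ≤ ‖f‖ :=
  haveI := isProbabilityMeasure_VxaN hd x a N
  f.norm_integral_le_norm _

lemma integral_Vxa {d : ℕ} (hd : 1 ≤ d) {x : Ed d} {m a : ℝ} (hm : 0 < m) (ha : 0 < a)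
    (f : BoundedContinuousFunction (Omega1 x) ℝ) :
    ∫ ω, f ω ∂(Vxa x m a) = ∫ t in Ioi (0 : ℝ),
      m ^ 2 / 2 * exp (-(m ^ 2 / 2 * t)) * ∫ ω, f ω ∂(VxaN x a ⌊t / (a ^ 2 / d)⌋₊) := by
  have hd' : (0 : ℝ) < d := Nat.cast_pos.2 hd
  have hV := fun N => isProbabilityMeasure_VxaN hd x a N
  have hh : 0 < a ^ 2 / d := by positivity
  have hc : 0 < m ^ 2 / 2 := by positivity
  have hsum := hasSum_integral_exp_neg_mul_floor hc hh (G := fun N => ∫ ω, f ω ∂(VxaN x a N))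
    (abs_integral_VxaN_le hd f a)
  have hgeom : Summable fun N : ℕ => exp (-m ^ 2 * a ^ 2 * N / (2 * d)) := by
    have : ∀ N : ℕ, -m ^ 2 * a ^ 2 * N / (2 * d) = N * -(m ^ 2 / 2 * (a ^ 2 / d)) := fun N => by
      field_simp
    simp only [this]
    exact Real.summable_exp_nat_mul_iff.2 (neg_neg_iff_pos.2 (mul_pos hc hh))
  have hfin : IsFiniteMeasure (Measure.sum fun N : ℕ =>
      ENNReal.ofReal (exp (-m ^ 2 * a ^ 2 * N / (2 * d))) • VxaN x a N) := by
    constructor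
    rw [Measure.sum_apply _ MeasurableSet.univ]
    simpa using hgeom.tsum_ofReal_lt_top
  have hs := hasSum_integral_measure (f.integrable (Measure.sum fun N : ℕ =>
    ENNReal.ofReal (exp (-m ^ 2 * a ^ 2 * N / (2 * d))) • VxaN x a N))
  rw [Vxa, integral_smul_measure]
  refine (hs.const_smul _).unique (hsum.congr_fun fun N => ?_)
  have h1 : exp (-m ^ 2 * a ^ 2 / (2 * d)) ≤ 1 := by
    rw [exp_le_one_iff, neg_mul, neg_div, neg_nonpos]
    positivity
  rw [integral_smul_measure, ENNReal.toReal_ofReal (exp_nonneg _),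
    ENNReal.toReal_ofReal (sub_nonneg.2 h1), smul_eq_mul, smul_eq_mul]
  congr 4 <;> field_simp

lemma dist_le_of_dist_eq_quotDist {d : ℕ} {x : Ed d} {Q : Type*} [MetricSpace Q]
    {pr : Omega1 x → Q} (hdist : ∀ ω ω' : Omega1 x, dist (pr ω) (pr ω') = quotDist ω.1 ω'.1)
    (ω ω' : Omega1 x) : dist (pr ω) (pr ω') ≤ dist ω ω' := by
  rw [hdist]
  refine (ciInf_le ⟨0, ?_⟩ ⟨Homeomorph.refl _, monotone_id⟩).trans_eq ?_
  · rintro _ ⟨φ, rfl⟩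
    exact dist_nonneg
  · rfl

/-- Weak convergence of the geometrically weighted random walks on parametrized paths. -/
theorem tendsto_integral_Vxa {d : ℕ} (hd : 1 ≤ d) {m : ℝ} (hm : 0 < m) {x : Ed d}
    {Wt : ℝ → Measure (Omega1 x)} (hWt : IsWienerFamily x Wt)
    (f : BoundedContinuousFunction (Omega1 x) ℝ) :
    Tendsto (fun a : ℝ => ∫ ω, f ω ∂(Vxa x m a)) (𝓝[>] 0)
      (𝓝 ((m ^ 2 / 2) * ∫ t in Ioi (0 : ℝ), exp (-m ^ 2 * t / 2) * ∫ ω, f ω ∂(Wt t))) := by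
  have hd' : (0 : ℝ) < d := Nat.cast_pos.2 hd
  have hc : 0 < m ^ 2 / 2 := by positivity
  refine tendsto_of_seq_tendsto fun a ha => ?_
  obtain ⟨ha0, hapos⟩ := tendsto_nhdsWithin_iff.1 ha
  have hlim : (m ^ 2 / 2) * ∫ t in Ioi (0 : ℝ), exp (-m ^ 2 * t / 2) * ∫ ω, f ω ∂(Wt t) =
      ∫ t in Ioi (0 : ℝ), m ^ 2 / 2 * exp (-(m ^ 2 / 2 * t)) * ∫ ω, f ω ∂(Wt t) := by
    rw [← integral_const_mul]
    refine integral_congr_ae (Eventually.of_forall fun t => ?_)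
    simp only [← mul_assoc]
    congr 3
    ring
  rw [hlim]
  have hdct : Tendsto (fun k => ∫ t in Ioi (0 : ℝ), m ^ 2 / 2 * exp (-(m ^ 2 / 2 * t)) *
      ∫ ω, f ω ∂(VxaN x (a k) ⌊t / (a k ^ 2 / d)⌋₊)) atTop
      (𝓝 (∫ t in Ioi (0 : ℝ), m ^ 2 / 2 * exp (-(m ^ 2 / 2 * t)) * ∫ ω, f ω ∂(Wt t))) := by
    refine tendsto_integral_of_dominated_convergence
      (fun t => m ^ 2 / 2 * exp (-(m ^ 2 / 2 * t)) * ‖f‖) (fun k => ?_) ?_ (fun k => ?_) ?_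
    · exact (integrableOn_exp_neg_mul_mul_floor hc
        (abs_integral_VxaN_le hd f (a k))).aestronglyMeasurable
    · exact integrableOn_exp_neg_mul_mul_floor (h := 1) hc
        (G := fun _ => ‖f‖) fun _ => (abs_norm f).le
    · refine Eventually.of_forall fun t => ?_
      rw [norm_mul, Real.norm_of_nonneg (by positivity)]
      exact mul_le_mul_of_nonneg_left (abs_integral_VxaN_le hd f _ _) (by positivity)
    · refine (ae_restrict_iff' measurableSet_Ioi).2 (Eventually.of_forall fun t ht => ?_)
      refine (tendsto_integral_VxaN hd hWt ht ha0 ?_ f).const_mul _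
      have hx : Tendsto (fun k => d / a k ^ 2) atTop atTop := by
        have h2 : Tendsto (fun k => a k ^ 2) atTop (𝓝[>] 0) :=
          tendsto_nhdsWithin_iff.2 ⟨by simpa using ha0.pow 2,
            hapos.mono fun k hk => pow_pos (mem_Ioi.1 hk) 2⟩
        simpa only [div_eq_mul_inv, Pi.inv_apply] using
          h2.inv_tendsto_nhdsGT_zero.const_mul_atTop hd'
      refine ((tendsto_nat_floor_mul_div_atTop (mem_Ioi.1 ht).le).comp hx).congr fun k => ?_
      rw [Function.comp_apply, div_div_eq_mul_div t, ← mul_div_assoc, div_div_eq_mul_div,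
        mul_comm (a k ^ 2)]
  refine hdct.congr' ?_
  filter_upwards [hapos] with k hk
  exact (integral_Vxa hd hm hk f).symm

/-- **Theorem 3.2**: the pushed-forward measures `V_{x,a} = π_* V'_{x,a}` on the space
`Ω̄(x)` of unparametrized paths converge weakly, as `a → 0⁺`, to `(m²/2) V_x`, where
`V_x = π_* V'_x`.  Here `Ω̄(x)` is (any realization of) the metric quotient of `Ω(x)`
by the reparametrization pseudo-metric `d̄`, with quotient map `π = pr`. -/
theorem Vxa_pushforward_tendsto_weakly (d : ℕ) (hd : 1 ≤ d) (m : ℝ) (hm : 0 < m)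
    (x : Ed d) (Wt : ℝ → Measure (Omega1 x)) (hWt : IsWienerFamily x Wt)
    (Q : Type) [MetricSpace Q] [MeasurableSpace Q] [BorelSpace Q]
    (pr : Omega1 x → Q) (hsurj : Function.Surjective pr)
    (hdist : ∀ ω ω' : Omega1 x, dist (pr ω) (pr ω') = quotDist ω.1 ω'.1) :
    ∀ g : BoundedContinuousFunction Q ℝ,
      Tendsto (fun a : ℝ => ∫ q, g q ∂(Measure.map pr (Vxa x m a)))
        (nhdsWithin 0 (Set.Ioi 0))
        (nhds ((m ^ 2 / 2) *
          ∫ t in Set.Ioi (0 : ℝ), Real.exp (-m ^ 2 * t / 2) * ∫ ω, g (pr ω) ∂(Wt t))) := by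
  intro g
  have hcont : Continuous pr := (LipschitzWith.of_dist_le_mul (K := 1) fun ω ω' => by
    simpa using dist_le_of_dist_eq_quotDist hdist ω ω').continuous
  have hmap : ∀ a, ∫ q, g q ∂(Measure.map pr (Vxa x m a)) = ∫ ω, g (pr ω) ∂(Vxa x m a) := fun a =>
    integral_map hcont.measurable.aemeasurable g.continuous.aestronglyMeasurable
  simp only [hmap]
  exact tendsto_integral_Vxa hd hm hWt (g.compContinuous ⟨pr, hcont⟩)

end
end

section
/- (Theorem 3.3, piecewise-linear case) Fix an integer d ≥ 1, m > 0 and x, y ∈ ℝ^d with x ≠ y. Then the finite measures W_{x,y,a} on Γ̃(x,y) converge weakly, as a → 0⁺, to (m²/2)·W_{x,y}. -/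
open MeasureTheory Filter Topology Real Set
open scoped RealInnerProductSpace ENNReal unitInterval

noncomputable section

/-- the sequence of points `x, vs 0, …, vs (N-1), y` (with value `y` from index `N+1` on). -/
def pinPts {d : ℕ} (x y : Ed d) {N : ℕ} (vs : Fin N → Ed d) (j : ℕ) : Ed d :=
  if h0 : j = 0 then x else if h : j ≤ N then vs ⟨j - 1, by omega⟩ else y

lemma pinPts_zero {d : ℕ} (x y : Ed d) {N : ℕ} (vs : Fin N → Ed d) :
    pinPts x y vs 0 = x := by simp [pinPts]

lemma pinPts_last {d : ℕ} (x y : Ed d) {N : ℕ} (vs : Fin N → Ed d) :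
    pinPts x y vs (N + 1) = y := by
  have h1 : ¬(N + 1 = 0) := Nat.succ_ne_zero N
  have h2 : ¬(N + 1 ≤ N) := by omega
  simp [pinPts, h1, h2]

lemma pin_telescope {d : ℕ} (x y : Ed d) {N : ℕ} (vs : Fin N → Ed d) :
    x + ∑ i : Fin (N + 1), (pinPts x y vs ((i : ℕ) + 1) - pinPts x y vs (i : ℕ)) = y := by
  rw [Fin.sum_univ_eq_sum_range (fun j => pinPts x y vs (j + 1) - pinPts x y vs j) (N + 1)]
  rw [Finset.sum_range_sub (fun j => pinPts x y vs j) (N + 1)]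
  rw [pinPts_zero, pinPts_last]
  abel

/-- The discrete measure `W_{x,y,a,N+1}`, i.e. the measure
`∏_{i=1}^{N+1} (2πa²)^{-d/2} exp(-|x_i - x_{i-1}|²/(2a²)) dx_1 … dx_N`
(with `x_0 = x`, `x_{N+1} = y`) on `(N+1)`-step piecewise linear paths from `x` to `y`,
placed on `{a²(N+1)} × Ω(x,y) ⊆ ℝ × Ω(x,y)`.  For `N = 0` this is the point mass of
weight `(2πa²)^{-d/2} e^{-|x-y|²/(2a²)}` at `(a², linear path from x to y)`. -/
def WxyaN {d : ℕ} (x y : Ed d) (a : ℝ) (N : ℕ) : Measure (ℝ × Omega2 x y) :=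
  Measure.map
    (fun vs : Fin N → Ed d =>
      ((a ^ 2 * (N + 1) : ℝ),
        pwLin2 x y (N + 1) (fun i => pinPts x y vs ((i : ℕ) + 1) - pinPts x y vs (i : ℕ))
          (pin_telescope x y vs)))
    (volume.withDensity fun vs : Fin N → Ed d =>
      ENNReal.ofReal (∏ i : Fin (N + 1),
        (2 * π * a ^ 2) ^ (-(d : ℝ) / 2) *
          Real.exp (-‖pinPts x y vs ((i : ℕ) + 1) - pinPts x y vs (i : ℕ)‖ ^ 2 /
            (2 * a ^ 2))))

/-- The approximating measure
`W_{x,y,a} = (1 - e^{-m²a²/2}) Σ_{N=1}^∞ e^{-m²a²N/2} W_{x,y,a,N}`. -/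
def Wxya {d : ℕ} (x y : Ed d) (m a : ℝ) : Measure (ℝ × Omega2 x y) :=
  ENNReal.ofReal (1 - Real.exp (-m ^ 2 * a ^ 2 / 2)) •
    Measure.sum fun N : ℕ =>
      ENNReal.ofReal (Real.exp (-m ^ 2 * a ^ 2 * (N + 1) / 2)) • WxyaN x y a N

/-- The measure `V'_{x,y,a,N}` giving mass `a^{-d} (2d)^{-N}` to each
(piecewise linearly parametrized) `N`-step nearest-neighbour lattice path
in `x + aℤ^d` from `x` to `y`. -/
def VxyaN {d : ℕ} (x y : Ed d) (a : ℝ) (N : ℕ) : Measure (Omega2 x y) :=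
  Measure.sum fun s : {s : Fin N → Fin d × Bool // x + ∑ i, stepVec a (s i) = y} =>
    (ENNReal.ofReal (a ^ (-(d : ℝ))) * (((2 * d : ℕ) : ℝ≥0∞) ^ N)⁻¹) •
      Measure.dirac (pwLin2 x y N (fun i => stepVec a (s.1 i)) s.2)

/-- The approximating measure
`V'_{x,y,a} = (1 - e^{-m²a²/(2d)}) Σ_{N=1}^∞ e^{-m²a²N/(2d)} V'_{x,y,a,N}`. -/
def Vxya {d : ℕ} (x y : Ed d) (m a : ℝ) : Measure (Omega2 x y) :=
  ENNReal.ofReal (1 - Real.exp (-m ^ 2 * a ^ 2 / (2 * d))) •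
    Measure.sum fun N : ℕ =>
      ENNReal.ofReal (Real.exp (-m ^ 2 * a ^ 2 * (N + 1) / (2 * d))) • VxyaN x y a (N + 1)

/-- `Wt` is the family of pinned Wiener measures `(W_{x,y}^t)_{t>0}` on `Ω(x,y)`:
finite Borel measures characterized by the characteristic functions of their finite
dimensional distributions: for `0 = t_0 < t_1 < ⋯ < t_n < 1`, with `η_i = ξ_i + ⋯ + ξ_n`,
`∫ exp(i Σ_j ξ_j·ω(t_j)) dW_{x,y}^t = (2πt)^{-d/2} e^{-|x-y|²/(2t)} ·
exp(-(t/2)(Σ_j (t_j - t_{j-1})|η_j|² - |Σ_j t_j ξ_j|²) + i Σ_j ((1-t_j)x + t_j y)·ξ_j)`;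
in particular (`n = 0`) the total mass is the heat kernel `(2πt)^{-d/2} e^{-|x-y|²/(2t)}`. -/
def IsPinnedWienerFamily {d : ℕ} (x y : Ed d) (Wt : ℝ → Measure (Omega2 x y)) : Prop :=
  ∀ t : ℝ, 0 < t → (IsFiniteMeasure (Wt t) ∧
    ∀ (n : ℕ) (ts : ℕ → ℝ), ts 0 = 0 → (∀ i < n, ts i < ts (i + 1)) → ts n < 1 →
      ∀ ξ : Fin n → Ed d,
        (∫ ω : Omega2 x y, Complex.exp (Complex.I *
            ((∑ i : Fin n, ⟪ξ i, evalAt ω.1 (ts ((i : ℕ) + 1))⟫ : ℝ) : ℂ)) ∂(Wt t))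
          = (((2 * π * t) ^ (-(d : ℝ) / 2) * Real.exp (-‖x - y‖ ^ 2 / (2 * t)) : ℝ) : ℂ) *
            Complex.exp
              (((-(t / 2) *
                  ((∑ i : Fin n,
                      (ts ((i : ℕ) + 1) - ts (i : ℕ)) * ‖∑ j ∈ Finset.Ici i, ξ j‖ ^ 2)
                    - ‖∑ i : Fin n, ts ((i : ℕ) + 1) • ξ i‖ ^ 2) : ℝ) : ℂ)
                + Complex.I *
                  ((∑ i : Fin n,
                    ⟪ξ i, (1 - ts ((i : ℕ) + 1)) • x + ts ((i : ℕ) + 1) • y⟫ : ℝ) : ℂ)))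

/-- Passing from the points of a walk started at `0` to its increments preserves volume. -/
lemma measurePreserving_increments {d : ℕ} (n : ℕ) :
    MeasurePreserving (fun (q : Fin n → Ed d) (i : Fin n) => q i - prevPt 0 q i)
      volume volume := by
  induction n with
  | zero =>
    convert MeasurePreserving.id (volume : Measure (Fin 0 → Ed d)) using 1
  | succ n ih =>
    let e := MeasurableEquiv.piFinSuccAbove (fun _ : Fin (n + 1) => Ed d) 0
    have he : MeasurePreserving e volume volume :=
      volume_preserving_piFinSuccAbove (fun _ : Fin (n + 1) => Ed d) 0
    have hskew : MeasurePreserving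
        (fun p : Ed d × (Fin n → Ed d) =>
          (p.1, fun i => (p.2 i - p.1) - prevPt 0 (fun j => p.2 j - p.1) i))
        (volume.prod volume) (volume.prod volume) := by
      refine (MeasurePreserving.id volume).skew_product (μc := volume) (μd := volume)
        (g := fun q0 (q : Fin n → Ed d) i => (q i - q0) - prevPt 0 (fun j => q j - q0) i) ?_ ?_
      · exact ih.measurable.comp
          (measurable_snd.sub (measurable_pi_lambda _ fun _ => measurable_fst))
      · exact ae_of_all _ fun q0 =>
          (ih.comp (measurePreserving_sub_right volume fun _ => q0)).map_eq
    convert he.symm.comp (hskew.comp he) using 1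
    ext1 q
    funext i
    simp only [Function.comp, e, MeasurableEquiv.piFinSuccAbove_symm_apply]
    refine Fin.cases ?_ (fun j => ?_) i
    · simp [prevPt, Fin.insertNthEquiv]
    · simp only [Fin.insertNthEquiv, Equiv.coe_fn_mk, Fin.insertNth_zero, cast_eq, Fin.cons_succ]
      rcases j with ⟨j, hj⟩
      rcases j with _ | j
      · simp [prevPt, Fin.insertNthEquiv, Fin.tail]
      · simp [prevPt, Fin.insertNthEquiv, Fin.tail]

/-- The `i`-th increment of the path `x, vs 0, …, vs (N-1), y`. -/
def pinInc {d : ℕ} (x y : Ed d) {N : ℕ} (vs : Fin N → Ed d) (i : Fin (N + 1)) : Ed d :=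
  pinPts x y vs ((i : ℕ) + 1) - pinPts x y vs (i : ℕ)

lemma sum_pinInc {d : ℕ} (x y : Ed d) {N : ℕ} (vs : Fin N → Ed d) :
    ∑ i, pinInc x y vs i = y - x :=
  eq_sub_of_add_eq' (pin_telescope x y vs)

lemma pinPts_succ {d : ℕ} (x y : Ed d) {N : ℕ} (vs : Fin N → Ed d) (j : Fin N) :
    pinPts x y vs ((j : ℕ) + 1) = vs j := by
  simp [pinPts, Nat.succ_le_of_lt j.isLt]

/-- Passing from the interior points of a bridge and an endpoint `z` to the increments of the walk
with bridge part `vs` and endpoint `z` preserves volume. -/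
lemma measurePreserving_bridge {d : ℕ} (x y : Ed d) (N : ℕ) :
    MeasurePreserving
      (fun (p : Ed d × (Fin N → Ed d)) (i : Fin (N + 1)) =>
        pinInc x y p.2 i + ((N : ℝ) + 1)⁻¹ • (p.1 - (y - x)))
      (volume.prod volume) volume := by
  let e := MeasurableEquiv.piFinSuccAbove (fun _ : Fin (N + 1) => Ed d) (Fin.last N)
  have he : MeasurePreserving e volume volume :=
    volume_preserving_piFinSuccAbove (fun _ : Fin (N + 1) => Ed d) (Fin.last N)
  have hskew : MeasurePreserving
      (fun p : Ed d × (Fin N → Ed d) =>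
        (p.1, p.2 - fun j : Fin N =>
          x - (((j : ℕ) + 1 : ℝ) * ((N : ℝ) + 1)⁻¹) • (p.1 - (y - x))))
      (volume.prod volume) (volume.prod volume) := by
    refine (MeasurePreserving.id volume).skew_product
      (g := fun z q => q - fun j : Fin N =>
          x - (((j : ℕ) + 1 : ℝ) * ((N : ℝ) + 1)⁻¹) • (z - (y - x))) ?_ ?_
    · exact Continuous.measurable (by fun_prop)
    · exact ae_of_all _ fun z => (measurePreserving_sub_right volume _).map_eq
  have hN : (N : ℝ) + 1 ≠ 0 := by positivity
  convert (measurePreserving_increments (N + 1)).comp (he.symm.comp hskew) using 1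
  ext1 p
  funext i
  set q := (e.symm ∘ fun p : Ed d × (Fin N → Ed d) =>
        (p.1, p.2 - fun j : Fin N =>
          x - (((j : ℕ) + 1 : ℝ) * ((N : ℝ) + 1)⁻¹) • (p.1 - (y - x)))) p with hq
  have hqi : ∀ i : Fin (N + 1), q i = pinPts x y p.2 ((i : ℕ) + 1) - x
      + (((i : ℕ) + 1 : ℝ) * ((N : ℝ) + 1)⁻¹) • (p.1 - (y - x)) := by
    intro i
    refine Fin.lastCases ?_ (fun j => ?_) i
    · simp [hq, e, MeasurableEquiv.piFinSuccAbove_symm_apply, Fin.insertNthEquiv, pinPts_last, hN]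
    · simp only [hq, e, MeasurableEquiv.piFinSuccAbove_symm_apply, Fin.insertNthEquiv,
        Function.comp, Equiv.coe_fn_mk, Fin.insertNth_last, Fin.snoc_castSucc, Pi.sub_apply,
        Fin.val_castSucc, pinPts_succ]
      simp only [cast_eq]
      abel
  have hprev : prevPt 0 q i = pinPts x y p.2 (i : ℕ) - x
      + (((i : ℕ) : ℝ) * ((N : ℝ) + 1)⁻¹) • (p.1 - (y - x)) := by
    rcases i with ⟨i, hi⟩
    rcases i with _ | i
    · simp [prevPt, pinPts_zero]
    · simp [prevPt, hqi]
  change _ = q i - prevPt 0 q i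
  rw [hqi, hprev, pinInc, add_mul, one_mul, add_smul]
  abel

/-- Completing the square in the increments of a walk. -/
lemma sum_norm_sq_add_const {E : Type*} [NormedAddCommGroup E] [InnerProductSpace ℝ E] {n : ℕ}
    (w : Fin n → E) (c : E) :
    ∑ i, ‖w i + c‖ ^ 2 = ∑ i, ‖w i‖ ^ 2 + 2 * ⟪∑ i, w i, c⟫ + n * ‖c‖ ^ 2 := by
  simp only [norm_add_sq_real, Finset.sum_add_distrib, sum_inner, Finset.mul_sum]
  simp

lemma sum_norm_sq_bridge {d : ℕ} (x y z : Ed d) {N : ℕ} (vs : Fin N → Ed d) :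
    ∑ i, ‖pinInc x y vs i + ((N : ℝ) + 1)⁻¹ • (z - (y - x))‖ ^ 2
      = ∑ i, ‖pinInc x y vs i‖ ^ 2 - ‖x - y‖ ^ 2 / (N + 1) + ‖z‖ ^ 2 / (N + 1) := by
  have hN : (0 : ℝ) < (N : ℝ) + 1 := by positivity
  rw [sum_norm_sq_add_const, sum_pinInc, norm_smul, inner_smul_right, inner_sub_right, mul_pow,
    norm_sub_sq_real z, norm_sub_rev x y, real_inner_self_eq_norm_sq, real_inner_comm (y - x) z,
    Real.norm_of_nonneg (by positivity)]
  push_cast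
  field_simp
  ring

/-- `∑_{j ≥ i} ξ_j`, with `i` also allowed to be `N`. -/
def tailSum {E : Type*} [AddCommMonoid E] {N : ℕ} (ξ : Fin N → E) (i : Fin (N + 1)) : E :=
  ∑ j : Fin N, if (i : ℕ) ≤ (j : ℕ) then ξ j else 0

lemma sum_tailSum {d : ℕ} {N : ℕ} (ξ : Fin N → Ed d) :
    ∑ i, tailSum ξ i = ∑ j : Fin N, (((j : ℕ) : ℝ) + 1) • ξ j := by
  simp only [tailSum]
  rw [Finset.sum_comm]
  refine Finset.sum_congr rfl fun j _ => ?_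
  rw [Fin.sum_univ_eq_sum_range (fun i => if i ≤ (j : ℕ) then ξ j else 0) (N + 1),
    ← Finset.sum_filter, Finset.sum_const]
  have : (Finset.range (N + 1)).filter (fun i => i ≤ (j : ℕ)) = Finset.range ((j : ℕ) + 1) := by
    ext i
    have := j.isLt
    simp only [Finset.mem_filter, Finset.mem_range]
    omega
  rw [this, Finset.card_range, ← Nat.cast_smul_eq_nsmul ℝ]
  push_cast
  rfl

lemma sum_inner_tailSum {d : ℕ} (x y : Ed d) {N : ℕ} (vs ξ : Fin N → Ed d) :
    ∑ i, ⟪tailSum ξ i, pinInc x y vs i⟫ = ∑ j, ⟪ξ j, vs j⟫ - ⟪∑ j, ξ j, x⟫ := by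
  simp only [tailSum, sum_inner]
  rw [Finset.sum_comm, ← Finset.sum_sub_distrib]
  refine Finset.sum_congr rfl fun j _ => ?_
  have htel := Finset.sum_range_sub (fun i => pinPts x y vs i) ((j : ℕ) + 1)
  rw [pinPts_succ, pinPts_zero] at htel
  rw [← inner_sub_right, ← htel, inner_sum]
  simp only [pinInc]
  rw [Fin.sum_univ_eq_sum_range (fun i => ⟪if i ≤ (j : ℕ) then ξ j else 0,
    pinPts x y vs (i + 1) - pinPts x y vs i⟫) (N + 1)]
  symm
  refine Finset.sum_subset_zero_on_sdiff ?_ ?_ ?_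
  · intro i hi
    have := j.isLt
    simp only [Finset.mem_range] at *
    omega
  · intro i hi
    rw [if_neg, inner_zero_left]
    simp only [Finset.mem_sdiff, Finset.mem_range] at hi
    omega
  · intro i hi
    rw [if_pos]
    simp only [Finset.mem_range] at hi
    omega

lemma sum_norm_sq_tailSum {d : ℕ} {N : ℕ} (ξ : Fin N → Ed d) :
    ∑ i, ‖tailSum ξ i‖ ^ 2 = ∑ i : Fin N, ‖∑ j ∈ Finset.Ici i, ξ j‖ ^ 2 := by
  rw [Fin.sum_univ_castSucc]
  have hlast : tailSum ξ (Fin.last N) = 0 :=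
    Finset.sum_eq_zero fun j _ => if_neg (by simp)
  rw [hlast, norm_zero, zero_pow two_ne_zero, add_zero]
  refine Finset.sum_congr rfl fun i _ => ?_
  rw [tailSum, ← Finset.sum_filter]
  congr 3
  ext j
  simp

/-- The heat kernel `(2πt)^{-d/2} e^{-r²/(2t)}` at distance `r`. -/
def heatKer (d : ℕ) (t r : ℝ) : ℝ := (2 * π * t) ^ (-(d : ℝ) / 2) * Real.exp (-r ^ 2 / (2 * t))

lemma heatKer_pos (d : ℕ) {t : ℝ} (ht : 0 < t) (r : ℝ) : 0 < heatKer d t r := by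
  unfold heatKer
  positivity

lemma integral_heatKer_mul_cexp {d : ℕ} {s : ℝ} (hs : 0 < s) (θ : Ed d) :
    ∫ v : Ed d, (heatKer d s ‖v‖ : ℂ) * Complex.exp (Complex.I * (⟪θ, v⟫ : ℝ))
      = Complex.exp ((-(s / 2) * ‖θ‖ ^ 2 : ℝ) : ℂ) := by
  have hb : 0 < (((2 * s)⁻¹ : ℝ) : ℂ).re := by
    rw [Complex.ofReal_re]
    positivity
  have h := GaussianFourier.integral_cexp_neg_mul_sq_norm_add (V := Ed d) hb Complex.I θ
  have hfun : ∀ v : Ed d, (heatKer d s ‖v‖ : ℂ) * Complex.exp (Complex.I * (⟪θ, v⟫ : ℝ))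
      = (((2 * π * s) ^ (-(d : ℝ) / 2) : ℝ) : ℂ) *
        Complex.exp (-(((2 * s)⁻¹ : ℝ) : ℂ) * (‖v‖ : ℂ) ^ 2 + Complex.I * (⟪θ, v⟫ : ℝ)) := by
    intro v
    rw [heatKer, Complex.exp_add, Complex.ofReal_mul, mul_assoc]
    congr 2
    rw [Complex.ofReal_exp]
    congr 1
    push_cast
    field_simp
  simp_rw [hfun]
  rw [integral_const_mul]
  rw [h]
  have hpi : (π : ℂ) / (((2 * s)⁻¹ : ℝ) : ℂ) = ((2 * π * s : ℝ) : ℂ) := by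
    push_cast
    field_simp
  have hdim : ((Module.finrank ℝ (Ed d) : ℂ) / 2) = (((d : ℝ) / 2 : ℝ) : ℂ) := by
    simp
  have hpos : 0 < 2 * π * s := by positivity
  rw [hpi, hdim, ← Complex.ofReal_cpow hpos.le, ← mul_assoc, ← Complex.ofReal_mul,
    ← Real.rpow_add hpos, neg_div, neg_add_cancel, Real.rpow_zero, Complex.ofReal_one, one_mul]
  congr 1
  rw [Complex.I_sq]
  push_cast
  field_simp
  norm_num

lemma prod_heatKer {d n : ℕ} (s : ℝ) (v : Fin n → Ed d) :
    ∏ i, heatKer d s ‖v i‖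
      = ((2 * π * s) ^ (-(d : ℝ) / 2)) ^ n * Real.exp (-(∑ i, ‖v i‖ ^ 2) / (2 * s)) := by
  simp only [heatKer, Finset.prod_mul_distrib, Finset.prod_const, Finset.card_univ,
    Fintype.card_fin, ← Real.exp_sum, ← Finset.sum_div, Finset.sum_neg_distrib]

lemma integral_prod_heatKer_mul_cexp {d n : ℕ} {s : ℝ} (hs : 0 < s) (θ : Fin n → Ed d) :
    ∫ v : Fin n → Ed d, ((∏ i, heatKer d s ‖v i‖ : ℝ) : ℂ) *
        Complex.exp (Complex.I * (∑ i, ⟪θ i, v i⟫ : ℝ))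
      = Complex.exp ((-(s / 2) * ∑ i, ‖θ i‖ ^ 2 : ℝ) : ℂ) := by
  have hfun : ∀ v : Fin n → Ed d, ((∏ i, heatKer d s ‖v i‖ : ℝ) : ℂ) *
        Complex.exp (Complex.I * (∑ i, ⟪θ i, v i⟫ : ℝ))
      = ∏ i, ((heatKer d s ‖v i‖ : ℂ) * Complex.exp (Complex.I * (⟪θ i, v i⟫ : ℝ))) := by
    intro v
    rw [Finset.prod_mul_distrib, ← Complex.exp_sum, ← Finset.mul_sum]
    push_cast
    rfl
  simp_rw [hfun]
  rw [integral_fintype_prod_volume_eq_prod (fun i (v : Ed d) =>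
    (heatKer d s ‖v‖ : ℂ) * Complex.exp (Complex.I * (⟪θ i, v⟫ : ℝ)))]
  simp_rw [integral_heatKer_mul_cexp hs]
  rw [← Complex.exp_sum, Finset.mul_sum]
  push_cast
  rfl

lemma continuous_heatKer_norm (d : ℕ) (s : ℝ) : Continuous fun v : Ed d => heatKer d s ‖v‖ := by
  unfold heatKer
  fun_prop

lemma continuous_pinPts {d : ℕ} (x y : Ed d) {N : ℕ} (j : ℕ) :
    Continuous fun vs : Fin N → Ed d => pinPts x y vs j := by
  unfold pinPts
  split_ifs <;> fun_prop

lemma continuous_pinInc {d : ℕ} (x y : Ed d) {N : ℕ} (i : Fin (N + 1)) :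
    Continuous fun vs : Fin N → Ed d => pinInc x y vs i :=
  (continuous_pinPts x y _).sub (continuous_pinPts x y _)

/-- The characteristic function of the discrete bridge with step variance `s`. -/
lemma integral_bridge_cexp {d : ℕ} (x y : Ed d) {N : ℕ} {s : ℝ} (hs : 0 < s)
    (ξ : Fin N → Ed d) :
    ∫ vs : Fin N → Ed d, ((∏ i, heatKer d s ‖pinInc x y vs i‖ : ℝ) : ℂ) *
        Complex.exp (Complex.I * (∑ j, ⟪ξ j, vs j⟫ : ℝ))
      = (heatKer d (s * (N + 1)) ‖x - y‖ : ℂ) *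
        Complex.exp (((-(s * (N + 1) / 2) *
            ((∑ i : Fin N, ((N : ℝ) + 1)⁻¹ * ‖∑ j ∈ Finset.Ici i, ξ j‖ ^ 2)
              - ‖∑ i : Fin N, ((((i : ℕ) : ℝ) + 1) / (N + 1)) • ξ i‖ ^ 2) : ℝ) : ℂ)
          + Complex.I * ((∑ i : Fin N, ⟪ξ i, (1 - (((i : ℕ) : ℝ) + 1) / (N + 1)) • x
              + ((((i : ℕ) : ℝ) + 1) / (N + 1)) • y⟫ : ℝ) : ℂ)) := by
  have hN : (0 : ℝ) < (N : ℝ) + 1 := by positivity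
  have hsN : 0 < s * (N + 1) := by positivity
  set b : Ed d := ((N : ℝ) + 1)⁻¹ • ∑ i, tailSum ξ i with hb
  have hb' : b = ∑ i : Fin N, ((((i : ℕ) : ℝ) + 1) / (N + 1)) • ξ i := by
    rw [hb, sum_tailSum, Finset.smul_sum]
    refine Finset.sum_congr rfl fun i _ => ?_
    rw [smul_smul]
    congr 1
    field_simp
  have hsum : ∑ i, tailSum ξ i = ((N : ℝ) + 1) • b := by
    rw [hb, smul_smul, mul_inv_cancel₀ hN.ne', one_smul]
  have hfree := integral_prod_heatKer_mul_cexp hs fun i => tailSum ξ i + -b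
  have hθ : ∑ i, ‖tailSum ξ i + -b‖ ^ 2
      = ∑ i : Fin N, ‖∑ j ∈ Finset.Ici i, ξ j‖ ^ 2 - (N + 1) * ‖b‖ ^ 2 := by
    rw [sum_norm_sq_add_const, hsum, sum_norm_sq_tailSum, inner_neg_right, real_inner_smul_left,
      real_inner_self_eq_norm_sq, norm_neg]
    push_cast
    ring
  have hθsum : ∑ i, (tailSum ξ i + -b) = 0 := by
    rw [Finset.sum_add_distrib, hsum, Finset.sum_const, Finset.card_univ, Fintype.card_fin,
      ← Nat.cast_smul_eq_nsmul ℝ]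
    push_cast
    simp
  have hcont : Continuous fun v : Fin (N + 1) → Ed d =>
      ((∏ i, heatKer d s ‖v i‖ : ℝ) : ℂ) *
        Complex.exp (Complex.I * (∑ i, ⟪tailSum ξ i + -b, v i⟫ : ℝ)) := by
    have hprod : Continuous fun v : Fin (N + 1) → Ed d => ∏ i, heatKer d s ‖v i‖ :=
      continuous_finsetProd _ fun i _ => (continuous_heatKer_norm d s).comp (continuous_apply i)
    fun_prop
  have hΨ := measurePreserving_bridge x y N
  rw [← hΨ.map_eq, integral_map hΨ.measurable.aemeasurable hcont.aestronglyMeasurable] at hfree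
  set K : ℝ := (2 * π * (s * (N + 1))) ^ (-(d : ℝ) / 2) with hK
  have hKpos : 0 < K := by positivity
  set c : ℂ := ((K⁻¹ * Real.exp (‖x - y‖ ^ 2 / (2 * (s * (N + 1)))) : ℝ) : ℂ) *
    Complex.exp (Complex.I * ((-(⟪∑ j, ξ j, x⟫ + ⟪b, y - x⟫) : ℝ) : ℂ)) with hc
  have hpt : ∀ p : Ed d × (Fin N → Ed d),
      ((∏ i, heatKer d s ‖pinInc x y p.2 i + ((N : ℝ) + 1)⁻¹ • (p.1 - (y - x))‖ : ℝ) : ℂ) *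
        Complex.exp (Complex.I * (∑ i, ⟪tailSum ξ i + -b,
          pinInc x y p.2 i + ((N : ℝ) + 1)⁻¹ • (p.1 - (y - x))⟫ : ℝ))
      = (c * ((heatKer d (s * (N + 1)) ‖p.1‖ : ℂ) *
            Complex.exp (Complex.I * (⟪(0 : Ed d), p.1⟫ : ℝ)))) *
        (((∏ i, heatKer d s ‖pinInc x y p.2 i‖ : ℝ) : ℂ) *
          Complex.exp (Complex.I * (∑ j, ⟪ξ j, p.2 j⟫ : ℝ))) := by
    rintro ⟨z, vs⟩
    have hphase : ∑ i, ⟪tailSum ξ i + -b, pinInc x y vs i + ((N : ℝ) + 1)⁻¹ • (z - (y - x))⟫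
        = -(⟪∑ j, ξ j, x⟫ + ⟪b, y - x⟫) + ∑ j, ⟪ξ j, vs j⟫ := by
      simp only [inner_add_right]
      rw [Finset.sum_add_distrib, ← sum_inner, hθsum, inner_zero_left, add_zero]
      simp only [inner_add_left, inner_neg_left]
      rw [Finset.sum_add_distrib, Finset.sum_neg_distrib, ← inner_sum, sum_pinInc,
        sum_inner_tailSum]
      ring
    have hmod : ∏ i, heatKer d s ‖pinInc x y vs i + ((N : ℝ) + 1)⁻¹ • (z - (y - x))‖
        = (K⁻¹ * Real.exp (‖x - y‖ ^ 2 / (2 * (s * (N + 1))))) * heatKer d (s * (N + 1)) ‖z‖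
          * ∏ i, heatKer d s ‖pinInc x y vs i‖ := by
      rw [prod_heatKer, prod_heatKer, sum_norm_sq_bridge, heatKer, ← hK]
      have he : Real.exp (-(∑ i, ‖pinInc x y vs i‖ ^ 2 - ‖x - y‖ ^ 2 / (N + 1)
            + ‖z‖ ^ 2 / (N + 1)) / (2 * s))
          = Real.exp (‖x - y‖ ^ 2 / (2 * (s * (N + 1)))) *
            Real.exp (-‖z‖ ^ 2 / (2 * (s * (N + 1)))) *
            Real.exp (-(∑ i, ‖pinInc x y vs i‖ ^ 2) / (2 * s)) := by
        rw [← Real.exp_add, ← Real.exp_add]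
        congr 1
        field_simp
        ring
      rw [he]
      field_simp
    simp only []
    rw [hphase, hmod, hc, inner_zero_left]
    push_cast
    rw [mul_zero, Complex.exp_zero, mul_add Complex.I, Complex.exp_add]
    ring
  simp_rw [hpt] at hfree
  rw [integral_prod_mul (fun z : Ed d => c * ((heatKer d (s * (N + 1)) ‖z‖ : ℂ) *
            Complex.exp (Complex.I * (⟪(0 : Ed d), z⟫ : ℝ))))
      (fun vs : Fin N → Ed d => ((∏ i, heatKer d s ‖pinInc x y vs i‖ : ℝ) : ℂ) *
          Complex.exp (Complex.I * (∑ j, ⟪ξ j, vs j⟫ : ℝ))),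
    integral_const_mul, integral_heatKer_mul_cexp hsN, norm_zero, zero_pow two_ne_zero, mul_zero,
    Complex.ofReal_zero, Complex.exp_zero, mul_one, hθ] at hfree
  have hc0 : c ≠ 0 :=
    mul_ne_zero (Complex.ofReal_ne_zero.mpr (by positivity)) (Complex.exp_ne_zero _)
  refine mul_left_cancel₀ hc0 (hfree.trans ?_)
  have hcK : c * (heatKer d (s * (N + 1)) ‖x - y‖ : ℂ)
      = Complex.exp (Complex.I * ((-(⟪∑ j, ξ j, x⟫ + ⟪b, y - x⟫) : ℝ) : ℂ)) := by
    rw [hc, heatKer, ← hK, mul_right_comm, ← Complex.ofReal_mul, neg_div, Real.exp_neg]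
    have : K⁻¹ * Real.exp (‖x - y‖ ^ 2 / (2 * (s * (N + 1)))) *
        (K * (Real.exp (‖x - y‖ ^ 2 / (2 * (s * (N + 1)))))⁻¹) = 1 := by
      field_simp
    rw [this, Complex.ofReal_one, one_mul]
  have hmean : ∑ i : Fin N, ⟪ξ i, (1 - (((i : ℕ) : ℝ) + 1) / (N + 1)) • x
              + ((((i : ℕ) : ℝ) + 1) / (N + 1)) • y⟫ = ⟪∑ j, ξ j, x⟫ + ⟪b, y - x⟫ := by
    rw [hb', sum_inner, sum_inner, ← Finset.sum_add_distrib]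
    refine Finset.sum_congr rfl fun i _ => ?_
    rw [inner_add_right, inner_smul_right, inner_smul_right, real_inner_smul_left,
      inner_sub_right]
    ring
  rw [← mul_assoc, hcK, ← Complex.exp_add, hmean, ← hb', ← Finset.mul_sum]
  congr 1
  push_cast
  field_simp
  ring

/-- A finite measure on `(ℝ^d)^N` is determined by its characteristic function. -/
lemma ext_of_integral_cexp {d N : ℕ} {μ ν : Measure (Fin N → Ed d)} [IsFiniteMeasure μ]
    [IsFiniteMeasure ν]
    (h : ∀ ξ : Fin N → Ed d, ∫ v, Complex.exp (Complex.I * (∑ j, ⟪ξ j, v j⟫ : ℝ)) ∂μ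
      = ∫ v, Complex.exp (Complex.I * (∑ j, ⟪ξ j, v j⟫ : ℝ)) ∂ν) : μ = ν := by
  refine Measure.ext_of_charFunDual (funext fun L => ?_)
  let ξ : Fin N → Ed d := fun j =>
    (InnerProductSpace.toDual ℝ (Ed d)).symm 
      (L.comp (ContinuousLinearMap.single ℝ (fun _ : Fin N => Ed d) j))
  have hL : ∀ v, L v = ∑ j, ⟪ξ j, v j⟫ := by
    intro v
    simp only [ξ, InnerProductSpace.toDual_symm_apply, ContinuousLinearMap.comp_apply,
      ContinuousLinearMap.single_apply]
    rw [← map_sum, Finset.univ_sum_single]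
  simp only [charFunDual_apply, hL, mul_comm _ Complex.I]
  exact h ξ

/-- The values of a path at the times `1/(N+1), …, N/(N+1)`. -/
def sample {d : ℕ} {x y : Ed d} (N : ℕ) (ω : Omega2 x y) : Fin N → Ed d :=
  fun j => evalAt ω.1 ((((j : ℕ) : ℝ) + 1) / (N + 1))

lemma continuous_sample {d : ℕ} {x y : Ed d} (N : ℕ) :
    Continuous (sample N : Omega2 x y → Fin N → Ed d) :=
  continuous_pi fun _ => (continuous_eval_const _).comp continuous_subtype_val

/-- The piecewise linear path from `x` to `y` through the points `vs`. -/
def interp {d : ℕ} (x y : Ed d) {N : ℕ} (vs : Fin N → Ed d) : Omega2 x y :=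
  pwLin2 x y (N + 1) (pinInc x y vs) (pin_telescope x y vs)

lemma continuous_interp {d : ℕ} (x y : Ed d) (N : ℕ) :
    Continuous (interp x y : (Fin N → Ed d) → Omega2 x y) := by
  refine Continuous.subtype_mk (ContinuousMap.continuous_of_continuous_uncurry _ ?_) _
  refine continuous_const.add (continuous_finsetSum _ fun i _ => ?_)
  refine Continuous.smul (clamp01_continuous.comp (by fun_prop)) ?_
  exact (continuous_pinInc x y i).comp continuous_fst

/-- The law of the interior points of the discrete bridge with step variance `s`. -/
def bridgeMeas {d : ℕ} (x y : Ed d) (s : ℝ) (N : ℕ) : Measure (Fin N → Ed d) :=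
  volume.withDensity fun vs => ENNReal.ofReal (∏ i, heatKer d s ‖pinInc x y vs i‖)

lemma continuous_bridgeDensity {d : ℕ} (x y : Ed d) (s : ℝ) (N : ℕ) :
    Continuous fun vs : Fin N → Ed d => ∏ i, heatKer d s ‖pinInc x y vs i‖ :=
  continuous_finsetProd _ fun i _ => (continuous_heatKer_norm d s).comp (continuous_pinInc x y i)

lemma bridgeDensity_pos {d : ℕ} (x y : Ed d) {s : ℝ} (hs : 0 < s) {N : ℕ} (vs : Fin N → Ed d) :
    0 < ∏ i, heatKer d s ‖pinInc x y vs i‖ :=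
  Finset.prod_pos fun _ _ => heatKer_pos d hs _

lemma isFiniteMeasure_bridgeMeas {d : ℕ} (x y : Ed d) {s : ℝ} (hs : 0 < s) (N : ℕ) :
    IsFiniteMeasure (bridgeMeas x y s N) := by
  have h := integral_bridge_cexp x y hs (0 : Fin N → Ed d)
  have hint : Integrable (fun vs : Fin N → Ed d =>
      ((∏ i, heatKer d s ‖pinInc x y vs i‖ : ℝ) : ℂ)) := by
    refine Integrable.of_integral_ne_zero ?_
    simp only [Pi.zero_apply, inner_zero_left, Finset.sum_const_zero, Complex.ofReal_zero,
      mul_zero, Complex.exp_zero, mul_one] at h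
    rw [h]
    refine mul_ne_zero (Complex.ofReal_ne_zero.mpr (heatKer_pos d ?_ _).ne') (Complex.exp_ne_zero _)
    positivity
  exact isFiniteMeasure_withDensity_ofReal hint.re.2

lemma integral_bridgeMeas {d : ℕ} (x y : Ed d) {s : ℝ} (hs : 0 < s) {N : ℕ}
    (g : (Fin N → Ed d) → ℂ) :
    ∫ vs, g vs ∂(bridgeMeas x y s N)
      = ∫ vs, ((∏ i, heatKer d s ‖pinInc x y vs i‖ : ℝ) : ℂ) * g vs := by
  rw [bridgeMeas, integral_withDensity_eq_integral_toReal_smul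
    (continuous_bridgeDensity x y s N).measurable.ennreal_ofReal
    (ae_of_all _ fun _ => ENNReal.ofReal_lt_top)]
  refine integral_congr_ae (ae_of_all _ fun vs => ?_)
  simp only [ENNReal.toReal_ofReal (bridgeDensity_pos x y hs vs).le, Complex.real_smul]

lemma continuous_cexp_sum_inner {d N : ℕ} (ξ : Fin N → Ed d) :
    Continuous fun v : Fin N → Ed d => Complex.exp (Complex.I * (∑ j, ⟪ξ j, v j⟫ : ℝ)) := by
  fun_prop

lemma IsPinnedWienerFamily.integral_cexp_sample {d : ℕ} {x y : Ed d}
    {Wt : ℝ → Measure (Omega2 x y)} (hWt : IsPinnedWienerFamily x y Wt) {t : ℝ} (ht : 0 < t)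
    {N : ℕ} (ξ : Fin N → Ed d) :
    ∫ ω, Complex.exp (Complex.I * (∑ j, ⟪ξ j, sample N ω j⟫ : ℝ)) ∂(Wt t)
      = (heatKer d t ‖x - y‖ : ℂ) *
        Complex.exp (((-(t / 2) *
            ((∑ i : Fin N, ((N : ℝ) + 1)⁻¹ * ‖∑ j ∈ Finset.Ici i, ξ j‖ ^ 2)
              - ‖∑ i : Fin N, ((((i : ℕ) : ℝ) + 1) / (N + 1)) • ξ i‖ ^ 2) : ℝ) : ℂ)
          + Complex.I * ((∑ i : Fin N, ⟪ξ i, (1 - (((i : ℕ) : ℝ) + 1) / (N + 1)) • x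
              + ((((i : ℕ) : ℝ) + 1) / (N + 1)) • y⟫ : ℝ) : ℂ)) := by
  have hN : (0 : ℝ) < (N : ℝ) + 1 := by positivity
  have h := (hWt t ht).2 N (fun i => (i : ℝ) / (N + 1)) (by simp)
    (fun i _ => by
      rw [div_lt_div_iff_of_pos_right hN]
      push_cast
      linarith)
    (by
      rw [div_lt_one hN]
      linarith) ξ
  have hinc : ∀ i : Fin N, (((i : ℕ) : ℝ) + 1) / ((N : ℝ) + 1) - ((i : ℕ) : ℝ) / (N + 1)
      = ((N : ℝ) + 1)⁻¹ := by
    intro i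
    field_simp
    ring
  simp only [hinc, Nat.cast_add, Nat.cast_one] at h
  exact h

/-- The law of the values of a pinned Wiener path at equispaced times. -/
lemma IsPinnedWienerFamily.map_sample {d : ℕ} {x y : Ed d}
    {Wt : ℝ → Measure (Omega2 x y)} (hWt : IsPinnedWienerFamily x y Wt) {s : ℝ} (hs : 0 < s)
    (N : ℕ) : (Wt (s * (N + 1))).map (sample N) = bridgeMeas x y s N := by
  have ht : 0 < s * ((N : ℝ) + 1) := by positivity
  have := (hWt _ ht).1
  have := isFiniteMeasure_bridgeMeas x y hs N
  refine ext_of_integral_cexp fun ξ => ?_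
  rw [integral_map (continuous_sample N).measurable.aemeasurable
    (continuous_cexp_sum_inner ξ).aestronglyMeasurable, hWt.integral_cexp_sample ht,
    integral_bridgeMeas x y hs, integral_bridge_cexp x y hs]

/-- The straight path from `x` to `y`. -/
def straight {d : ℕ} (x y : Ed d) : PathSp d :=
  ⟨fun u => (1 - (u : ℝ)) • x + (u : ℝ) • y, by fun_prop⟩

/-- Dilation by `c` of the deviation of a path from the straight path. -/
def dilate {d : ℕ} {x y : Ed d} (c : ℝ) (ω : Omega2 x y) : Omega2 x y :=
  ⟨straight x y + c • (ω.1 - straight x y), by simp [straight, ω.2.1], by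
    simp [straight, ω.2.2]⟩

lemma continuous_dilate {d : ℕ} {x y : Ed d} :
    Continuous fun p : ℝ × Omega2 x y => dilate p.1 p.2 :=
  Continuous.subtype_mk (by fun_prop) _

lemma sample_dilate {d : ℕ} {x y : Ed d} {N : ℕ} (c : ℝ) (ω : Omega2 x y) (j : Fin N) :
    sample N (dilate c ω) j = c • sample N ω j + (1 - c) •
      ((1 - (((j : ℕ) : ℝ) + 1) / (N + 1)) • x + ((((j : ℕ) : ℝ) + 1) / (N + 1)) • y) := by
  have hN : (0 : ℝ) < (N : ℝ) + 1 := by positivity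
  have hmem : (((j : ℕ) : ℝ) + 1) / (N + 1) ∈ Set.Icc (0 : ℝ) 1 := by
    refine ⟨by positivity, (div_le_one hN).mpr ?_⟩
    have : ((j : ℕ) : ℝ) < N := by exact_mod_cast j.isLt
    linarith
  simp only [sample, evalAt, dilate, straight, ContinuousMap.add_apply, ContinuousMap.smul_apply,
    ContinuousMap.sub_apply, ContinuousMap.coe_mk, Set.projIcc_of_mem zero_le_one hmem]
  module

/-- Brownian scaling for pinned Wiener measures, at equispaced times. -/
lemma IsPinnedWienerFamily.map_sample_scaling {d : ℕ} {x y : Ed d}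
    {Wt : ℝ → Measure (Omega2 x y)} (hWt : IsPinnedWienerFamily x y Wt) {t : ℝ} (ht : 0 < t)
    (N : ℕ) : (Wt t).map (sample N)
      = ENNReal.ofReal (heatKer d t ‖x - y‖ / heatKer d 1 ‖x - y‖) •
        (Wt 1).map (fun ω => sample N (dilate (√t) ω)) := by
  have := (hWt t ht).1
  have := (hWt 1 one_pos).1
  have h1 := heatKer_pos d one_pos ‖x - y‖
  have hcont : Continuous fun ω : Omega2 x y => sample N (dilate (√t) ω) :=
    (continuous_sample N).comp (continuous_dilate.comp (Continuous.prodMk_right (√t)))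
  have : IsFiniteMeasure (ENNReal.ofReal (heatKer d t ‖x - y‖ / heatKer d 1 ‖x - y‖) •
        (Wt 1).map (fun ω => sample N (dilate (√t) ω))) :=
    Measure.smul_finite _ ENNReal.ofReal_ne_top
  refine ext_of_integral_cexp fun ξ => ?_
  rw [integral_smul_measure, integral_map (continuous_sample N).measurable.aemeasurable
    (continuous_cexp_sum_inner ξ).aestronglyMeasurable, integral_map hcont.measurable.aemeasurable
    (continuous_cexp_sum_inner ξ).aestronglyMeasurable, hWt.integral_cexp_sample ht,
    ENNReal.toReal_ofReal (div_pos (heatKer_pos d ht _) h1).le]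
  set M : ℝ := ∑ i : Fin N, ⟪ξ i, (1 - (((i : ℕ) : ℝ) + 1) / (N + 1)) • x
              + ((((i : ℕ) : ℝ) + 1) / (N + 1)) • y⟫ with hM
  have hfun : ∀ ω : Omega2 x y,
      Complex.exp (Complex.I * (∑ j, ⟪ξ j, sample N (dilate (√t) ω) j⟫ : ℝ))
      = Complex.exp (Complex.I * (((1 - √t) * M : ℝ) : ℂ)) *
        Complex.exp (Complex.I * (∑ j, ⟪(√t • ξ) j, sample N ω j⟫ : ℝ)) := by
    intro ω
    rw [← Complex.exp_add, ← mul_add, ← Complex.ofReal_add, hM, Finset.mul_sum,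
      ← Finset.sum_add_distrib]
    congr 3
    refine Finset.sum_congr rfl fun j _ => ?_
    rw [sample_dilate, inner_add_right, inner_smul_right, inner_smul_right, Pi.smul_apply,
      real_inner_smul_left]
    ring
  simp_rw [hfun]
  rw [integral_const_mul, hWt.integral_cexp_sample one_pos]
  have hsq : ∀ v : Ed d, ‖√t • v‖ ^ 2 = t * ‖v‖ ^ 2 := fun v => by
    rw [norm_smul, mul_pow, Real.norm_of_nonneg (Real.sqrt_nonneg t), Real.sq_sqrt ht.le]
  simp only [Pi.smul_apply, smul_comm _ (√t), ← Finset.smul_sum, hsq, real_inner_smul_left,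
    ← Finset.mul_sum, ← hM]
  have h1' : (heatKer d 1 ‖x - y‖ : ℂ) ≠ 0 := Complex.ofReal_ne_zero.mpr h1.ne'
  rw [Complex.real_smul, mul_left_comm _ (heatKer d 1 ‖x - y‖ : ℂ), ← Complex.exp_add, ← mul_assoc,
    Complex.ofReal_div, div_mul_cancel₀ _ h1']
  congr 2
  push_cast
  ring

lemma pinPts_sample {d : ℕ} {x y : Ed d} (N : ℕ) (ω : Omega2 x y) {j : ℕ} (hj : j ≤ N + 1) :
    pinPts x y (sample N ω) j = evalAt ω.1 ((j : ℝ) / (N + 1)) := by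
  have hN : (N : ℝ) + 1 ≠ 0 := by positivity
  rcases Nat.eq_zero_or_pos j with rfl | hpos
  · rw [pinPts_zero, evalAt, Nat.cast_zero, zero_div, Set.projIcc_left]
    exact ω.2.1.symm
  rcases hj.eq_or_lt with rfl | hlt
  · rw [pinPts_last, evalAt, Nat.cast_add, Nat.cast_one, div_self hN, Set.projIcc_right]
    exact ω.2.2.symm
  · obtain ⟨i, rfl⟩ := Nat.exists_eq_add_of_lt hpos
    have := pinPts_succ x y (sample N ω) ⟨i, by omega⟩
    simp only [zero_add] at *
    rw [this]
    simp [sample]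

/-- On the `k`-th subinterval the interpolation is a convex combination of the two endpoints. -/
lemma interp_apply {d : ℕ} (x y : Ed d) {N : ℕ} (vs : Fin N → Ed d) (u : unitInterval) {k : ℕ}
    (hk : k ≤ N) (h1 : (k : ℝ) ≤ (N + 1) * u) (h2 : ((N : ℝ) + 1) * u ≤ k + 1) :
    (interp x y vs).1 u = pinPts x y vs k
      + ((N + 1) * (u : ℝ) - k) • (pinPts x y vs (k + 1) - pinPts x y vs k) := by
  change x + ∑ i : Fin (N + 1), clamp01 (((N + 1 : ℕ) : ℝ) * (u : ℝ) - ((i : ℕ) : ℝ)) •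
    (pinPts x y vs ((i : ℕ) + 1) - pinPts x y vs (i : ℕ)) = _
  rw [Fin.sum_univ_eq_sum_range (fun i => clamp01 (((N + 1 : ℕ) : ℝ) * (u : ℝ) - (i : ℝ)) •
    (pinPts x y vs (i + 1) - pinPts x y vs i)) (N + 1)]
  obtain ⟨l, rfl⟩ := Nat.exists_eq_add_of_le hk
  rw [show k + l + 1 = (k + 1) + l by ring, Finset.sum_range_add, Finset.sum_range_succ]
  push_cast at h1 h2 ⊢
  have hlow : ∑ i ∈ Finset.range k, clamp01 (((k : ℝ) + 1 + l) * (u : ℝ) - (i : ℝ)) •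
      (pinPts x y vs (i + 1) - pinPts x y vs i) = pinPts x y vs k - x := by
    have := Finset.sum_range_sub (fun i => pinPts x y vs i) k
    rw [pinPts_zero] at this
    rw [← this]
    refine Finset.sum_congr rfl fun i hi => ?_
    have hik : (i : ℝ) + 1 ≤ k := by exact_mod_cast Finset.mem_range.mp hi
    rw [clamp01_of_one_le (by nlinarith), one_smul]
  have hhigh : ∑ i ∈ Finset.range l,
      clamp01 (((k : ℝ) + 1 + l) * (u : ℝ) - ((k : ℝ) + 1 + (i : ℝ))) •
      (pinPts x y vs (k + 1 + i + 1) - pinPts x y vs (k + 1 + i)) = 0 := by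
    refine Finset.sum_eq_zero fun i _ => ?_
    have : (0 : ℝ) ≤ i := Nat.cast_nonneg i
    rw [clamp01_of_nonpos (by nlinarith), zero_smul]
  rw [hlow, hhigh, clamp01, max_eq_right (by nlinarith), min_eq_right (by nlinarith)]
  rw [show ((k : ℝ) + 1 + l) * (u : ℝ) - k = (k + l + 1) * u - k by ring]
  abel

lemma dist_interp_sample_le {d : ℕ} {x y : Ed d} (N : ℕ) (ω : Omega2 x y) {ε : ℝ} (hε : 0 ≤ ε)
    (h : ∀ u v : unitInterval, dist u v ≤ ((N : ℝ) + 1)⁻¹ → dist (ω.1 u) (ω.1 v) ≤ ε) :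
    dist (interp x y (sample N ω)) ω ≤ ε := by
  have hN : (0 : ℝ) < (N : ℝ) + 1 := by positivity
  rw [Subtype.dist_eq, ContinuousMap.dist_le hε]
  intro u
  obtain ⟨k, hk, h1, h2⟩ : ∃ k ≤ N, (k : ℝ) ≤ (N + 1) * u ∧ ((N : ℝ) + 1) * u ≤ k + 1 := by
    have hu0 : 0 ≤ ((N : ℝ) + 1) * u := mul_nonneg hN.le u.2.1
    rcases le_total ⌊((N : ℝ) + 1) * u⌋₊ N with hle | hle
    · exact ⟨_, hle, Nat.floor_le hu0, (Nat.lt_floor_add_one _).le⟩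
    · refine ⟨N, le_rfl, (Nat.le_floor_iff hu0).mp hle, ?_⟩
      nlinarith [u.2.2]
  rw [interp_apply x y _ u hk h1 h2, pinPts_sample N ω (by omega), pinPts_sample N ω (by omega)]
  have hnear : ∀ j : ℕ, j ≤ N + 1 → |((N : ℝ) + 1) * u - j| ≤ 1 →
      evalAt ω.1 ((j : ℝ) / (N + 1)) ∈ Metric.closedBall (ω.1 u) ε := by
    intro j hj hju
    have hmem : (j : ℝ) / (N + 1) ∈ Set.Icc (0 : ℝ) 1 :=
      ⟨by positivity, (div_le_one hN).mpr (by exact_mod_cast hj)⟩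
    refine h _ _ ?_
    rw [Set.projIcc_of_mem zero_le_one hmem, Subtype.dist_eq, Real.dist_eq, abs_sub_comm]
    have : (u : ℝ) - (j : ℝ) / (N + 1) = (((N : ℝ) + 1) * u - j) / (N + 1) := by
      field_simp
    simp only []
    rw [this, abs_div, abs_of_pos hN, div_eq_mul_inv]
    exact mul_le_of_le_one_left (by positivity) hju
  have hc := (convex_closedBall (ω.1 u) ε).add_smul_sub_mem
    (hnear k (by omega) (by rw [abs_le]; constructor <;> linarith))
    (hnear (k + 1) (by omega) (by push_cast; rw [abs_le]; constructor <;> linarith))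
    (t := (N + 1) * (u : ℝ) - k) ⟨by linarith, by linarith⟩
  exact hc

/-- Interpolations at finer and finer equispaced times of a convergent family of paths converge to
the limit path. -/
lemma tendsto_interp_sample {d : ℕ} {x y : Ed d} {ι : Type*} {l : Filter ι} {n : ι → ℕ}
    (hn : Tendsto n l atTop) {ω' : ι → Omega2 x y} {ω : Omega2 x y}
    (hω : Tendsto ω' l (𝓝 ω)) :
    Tendsto (fun i => interp x y (sample (n i) (ω' i))) l (𝓝 ω) := by
  rw [Metric.tendsto_nhds]
  intro ε hε
  have huc := CompactSpace.uniformContinuous_of_continuous ω.1.continuous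
  obtain ⟨δ, hδ, hδε⟩ := Metric.uniformContinuous_iff.mp huc (ε / 5) (by positivity)
  have hN : ∀ᶠ i in l, ((n i : ℝ) + 1)⁻¹ < δ := by
    have := (tendsto_one_div_add_atTop_nhds_zero_nat (𝕜 := ℝ)).comp hn
    filter_upwards [this.eventually (gt_mem_nhds hδ)] with i hi
    simpa using hi
  filter_upwards [hN, Metric.tendsto_nhds.mp hω (ε / 5) (by positivity)] with i hi hi'
  have hpt : ∀ u, dist ((ω' i).1 u) (ω.1 u) ≤ ε / 5 := fun u =>
    (ContinuousMap.dist_apply_le_dist u).trans hi'.le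
  have hle : dist (interp x y (sample (n i) (ω' i))) (ω' i) ≤ 3 * (ε / 5) := by
    refine dist_interp_sample_le _ _ (by positivity) fun u v huv => ?_
    have h1 := hpt u
    have h2 := hpt v
    have h3 := hδε (huv.trans_lt hi)
    have h4 := dist_triangle4_right ((ω' i).1 u) ((ω' i).1 v) (ω.1 u) (ω.1 v)
    linarith
  have := dist_triangle (interp x y (sample (n i) (ω' i))) (ω' i) ω
  linarith

/-- Brownian scaling for pinned Wiener measures. -/
lemma IsPinnedWienerFamily.integral_eq {d : ℕ} {x y : Ed d}
    {Wt : ℝ → Measure (Omega2 x y)} (hWt : IsPinnedWienerFamily x y Wt) {t : ℝ} (ht : 0 < t)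
    (g : BoundedContinuousFunction (Omega2 x y) ℝ) :
    ∫ ω, g ω ∂(Wt t) = heatKer d t ‖x - y‖ / heatKer d 1 ‖x - y‖ *
      ∫ ω, g (dilate (√t) ω) ∂(Wt 1) := by
  have := (hWt t ht).1
  have := (hWt 1 one_pos).1
  have hd : Continuous (dilate (√t) : Omega2 x y → Omega2 x y) :=
    continuous_dilate.comp (Continuous.prodMk_right (√t))
  have hN : ∀ N : ℕ, Continuous fun ω : Omega2 x y => g (interp x y (sample N ω)) := fun N =>
    g.continuous.comp ((continuous_interp x y N).comp (continuous_sample N))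
  have hlim : Tendsto (fun N : ℕ => ∫ ω, g (interp x y (sample N ω)) ∂(Wt t)) atTop
      (𝓝 (∫ ω, g ω ∂(Wt t))) :=
    tendsto_integral_of_dominated_convergence (fun _ => ‖g‖)
      (fun N => (hN N).aestronglyMeasurable) (integrable_const _)
      (fun N => ae_of_all _ fun ω => g.norm_coe_le_norm _)
      (ae_of_all _ fun ω => (g.continuous.tendsto ω).comp
        (tendsto_interp_sample tendsto_id tendsto_const_nhds))
  have hlim1 : Tendsto (fun N : ℕ => ∫ ω, g (interp x y (sample N (dilate (√t) ω))) ∂(Wt 1)) atTop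
      (𝓝 (∫ ω, g (dilate (√t) ω) ∂(Wt 1))) :=
    tendsto_integral_of_dominated_convergence (fun _ => ‖g‖)
      (fun N => ((hN N).comp hd).aestronglyMeasurable) (integrable_const _)
      (fun N => ae_of_all _ fun ω => g.norm_coe_le_norm _)
      (ae_of_all _ fun ω => (g.continuous.tendsto _).comp
        (tendsto_interp_sample tendsto_id tendsto_const_nhds))
  refine tendsto_nhds_unique hlim ((hlim1.const_mul _).congr fun N => ?_)
  have hg : Continuous fun vs : Fin N → Ed d => g (interp x y vs) :=
    g.continuous.comp (continuous_interp x y N)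
  rw [← integral_map (φ := sample N) (f := fun vs => g (interp x y vs))
      (continuous_sample N).measurable.aemeasurable hg.aestronglyMeasurable,
    hWt.map_sample_scaling ht, integral_smul_measure,
    integral_map (φ := fun ω => sample N (dilate (√t) ω))
      ((continuous_sample N).comp hd).measurable.aemeasurable hg.aestronglyMeasurable,
    ENNReal.toReal_ofReal (div_pos (heatKer_pos d ht _) (heatKer_pos d one_pos _)).le, smul_eq_mul]

lemma WxyaN_eq_map {d : ℕ} (x y : Ed d) (a : ℝ) (N : ℕ) :
    WxyaN x y a N = (bridgeMeas x y (a ^ 2) N).map fun vs =>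
      ((a ^ 2 * (N + 1) : ℝ), interp x y vs) := rfl

lemma IsPinnedWienerFamily.integral_WxyaN {d : ℕ} {x y : Ed d}
    {Wt : ℝ → Measure (Omega2 x y)} (hWt : IsPinnedWienerFamily x y Wt) {a : ℝ} (ha : 0 < a)
    (N : ℕ) (f : BoundedContinuousFunction (ℝ × Omega2 x y) ℝ) :
    ∫ p, f p ∂(WxyaN x y a N)
      = heatKer d (a ^ 2 * (N + 1)) ‖x - y‖ / heatKer d 1 ‖x - y‖ *
        ∫ ω, f (a ^ 2 * (N + 1), interp x y (sample N (dilate (√(a ^ 2 * (N + 1))) ω)))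
          ∂(Wt 1) := by
  have hs : 0 < a ^ 2 := by positivity
  have ht : 0 < a ^ 2 * ((N : ℝ) + 1) := by positivity
  have hφ : Continuous fun vs : Fin N → Ed d => ((a ^ 2 * (N + 1) : ℝ), interp x y vs) :=
    continuous_const.prodMk (continuous_interp x y N)
  rw [WxyaN_eq_map, integral_map hφ.measurable.aemeasurable
      f.continuous.measurable.aestronglyMeasurable,
    ← hWt.map_sample hs, integral_map (f := fun vs => f (a ^ 2 * (N + 1), interp x y vs))
      (continuous_sample N).measurable.aemeasurable (f.continuous.comp hφ).aestronglyMeasurable]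
  exact hWt.integral_eq ht (f.compContinuous ⟨_, hφ.comp (continuous_sample N)⟩)

lemma exists_heatKer_le (d : ℕ) {r : ℝ} (hr : 0 < r) : ∃ C, ∀ t, 0 < t → heatKer d t r ≤ C := by
  refine ⟨1 + (d.factorial : ℝ) / (π * r ^ 2) ^ d, fun t ht => ?_⟩
  set u : ℝ := (2 * π * t)⁻¹ with hu
  have hu0 : 0 < u := by positivity
  have hc : 0 < π * r ^ 2 := by positivity
  have hexp : -r ^ 2 / (2 * t) = -(π * r ^ 2 * u) := by
    rw [hu]
    field_simp
  have hpow : (2 * π * t) ^ (-(d : ℝ) / 2) = u ^ ((d : ℝ) / 2) := by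
    rw [hu, Real.inv_rpow (by positivity), neg_div, Real.rpow_neg (by positivity)]
  have hle : u ^ ((d : ℝ) / 2) ≤ 1 + u ^ d := by
    rcases le_total u 1 with h | h
    · have := Real.rpow_le_one hu0.le h (by positivity : (0 : ℝ) ≤ (d : ℝ) / 2)
      have : 0 < u ^ d := by positivity
      linarith
    · have := Real.rpow_le_rpow_of_exponent_le h
        (by linarith [(Nat.cast_nonneg d : (0 : ℝ) ≤ d)] : (d : ℝ) / 2 ≤ d)
      rw [Real.rpow_natCast] at this
      linarith
  have hfac : u ^ d * Real.exp (-(π * r ^ 2 * u)) ≤ (d.factorial : ℝ) / (π * r ^ 2) ^ d := by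
    have h := Real.pow_div_factorial_le_exp (π * r ^ 2 * u) (by positivity) d
    rw [Real.exp_neg, ← div_eq_mul_inv, div_le_div_iff₀ (Real.exp_pos _) (by positivity)]
    rw [div_le_iff₀ (by positivity), mul_pow] at h
    linarith
  have hone : Real.exp (-(π * r ^ 2 * u)) ≤ 1 := Real.exp_le_one_iff.mpr (by
    rw [neg_nonpos]
    positivity)
  rw [heatKer, hexp, hpow]
  calc u ^ ((d : ℝ) / 2) * Real.exp (-(π * r ^ 2 * u))
      ≤ (1 + u ^ d) * Real.exp (-(π * r ^ 2 * u)) := by gcongr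
    _ ≤ _ := by rw [add_mul, one_mul]; linarith

/-- The integral of a step function with steps of length `h`. -/
lemma hasSum_mul_of_integrableOn_floor {h : ℝ} (hh : 0 < h) {J : ℕ → ℝ}
    (hJ : IntegrableOn (fun t : ℝ => J ⌊t / h⌋₊) (Set.Ioi 0)) :
    HasSum (fun N => h * J N) (∫ t in Set.Ioi (0 : ℝ), J ⌊t / h⌋₊) := by
  let s : ℕ → Set ℝ := fun N => {t | 0 ≤ t ∧ ⌊t / h⌋₊ = N}
  have hs : ∀ N, s N = Set.Ico (h * N) (h * (N + 1)) := by
    intro N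
    ext t
    simp only [s, Set.mem_ofPred_eq, Set.mem_Ico]
    constructor
    · rintro ⟨ht, htN⟩
      rw [Nat.floor_eq_iff (by positivity), le_div_iff₀ hh, div_lt_iff₀ hh] at htN
      constructor <;> linarith
    · rintro ⟨h1, h2⟩
      have ht : 0 ≤ t := le_trans (by positivity) h1
      refine ⟨ht, ?_⟩
      rw [Nat.floor_eq_iff (by positivity), le_div_iff₀ hh, div_lt_iff₀ hh]
      constructor <;> linarith
  have hU : ⋃ N, s N = Set.Ici 0 := by
    ext t
    simp [s]
  have hdisj : Pairwise (Function.onFun Disjoint s) := by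
    intro i j hij
    exact Set.disjoint_left.mpr fun t hi hj => hij (hi.2.symm.trans hj.2)
  have hmeas : ∀ N, MeasurableSet (s N) := fun N => hs N ▸ measurableSet_Ico
  have := hasSum_integral_iUnion (μ := volume) (f := fun t : ℝ => J ⌊t / h⌋₊) hmeas hdisj (by
    rw [hU, integrableOn_Ici_iff_integrableOn_Ioi]
    exact hJ)
  rw [hU, integral_Ici_eq_integral_Ioi] at this
  refine this.congr_fun fun N => ?_
  have hle : h * (N : ℝ) ≤ h * (N + 1) := by nlinarith
  rw [setIntegral_congr_fun (hmeas N) (g := fun _ => J N) (fun t ht => by simp [ht.2]),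
    setIntegral_const, hs N, Real.volume_real_Ico_of_le hle, smul_eq_mul]
  ring

/-- The masses of the discrete pinned measures are uniformly bounded when `x ≠ y`. -/
lemma IsPinnedWienerFamily.exists_norm_integral_WxyaN_le {d : ℕ} {x y : Ed d} (hxy : x ≠ y)
    {Wt : ℝ → Measure (Omega2 x y)} (hWt : IsPinnedWienerFamily x y Wt) :
    ∃ K, ∀ a : ℝ, 0 < a → ∀ (N : ℕ) (f : BoundedContinuousFunction (ℝ × Omega2 x y) ℝ),
      ‖∫ p, f p ∂(WxyaN x y a N)‖ ≤ K * ‖f‖ := by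
  have := (hWt 1 one_pos).1
  obtain ⟨C, hC⟩ := exists_heatKer_le d (norm_sub_pos_iff.mpr hxy)
  refine ⟨C / heatKer d 1 ‖x - y‖ * (Wt 1).real Set.univ, fun a ha N f => ?_⟩
  have h1 := heatKer_pos d one_pos ‖x - y‖
  have ht : 0 < a ^ 2 * ((N : ℝ) + 1) := by positivity
  have hN := heatKer_pos d ht ‖x - y‖
  rw [hWt.integral_WxyaN ha, norm_mul, Real.norm_of_nonneg (by positivity), mul_assoc]
  have hint := norm_integral_le_of_norm_le_const (μ := Wt 1) (C := ‖f‖)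
    (f := fun ω => f (a ^ 2 * (N + 1), interp x y (sample N (dilate (√(a ^ 2 * (N + 1))) ω))))
    (ae_of_all _ fun ω => f.norm_coe_le_norm _)
  have hCN := hC _ ht
  have hC0 := hN.trans_le hCN
  calc _ ≤ C / heatKer d 1 ‖x - y‖ * (‖f‖ * (Wt 1).real Set.univ) := by gcongr
    _ = _ := by ring

lemma summable_exp_neg_mul_add_one {c : ℝ} (hc : 0 < c) :
    Summable fun N : ℕ => Real.exp (-c * (N + 1)) := by
  have h := (summable_nat_add_iff 1).mpr (Real.summable_exp_nat_mul_iff.mpr (neg_lt_zero.mpr hc))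
  refine h.congr fun N => ?_
  push_cast
  rw [mul_comm]

/-- Integrals against `W_{x,y,a}` as weighted sums of integrals against `W_{x,y,a,N}`. -/
lemma IsPinnedWienerFamily.hasSum_integral_Wxya {d : ℕ} {x y : Ed d} (hxy : x ≠ y)
    {Wt : ℝ → Measure (Omega2 x y)} (hWt : IsPinnedWienerFamily x y Wt) {m a : ℝ} (hm : 0 < m)
    (ha : 0 < a) (f : BoundedContinuousFunction (ℝ × Omega2 x y) ℝ) :
    HasSum (fun N : ℕ => (1 - Real.exp (-m ^ 2 * a ^ 2 / 2)) *
        (Real.exp (-m ^ 2 * a ^ 2 * (N + 1) / 2) * ∫ p, f p ∂(WxyaN x y a N)))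
      (∫ p, f p ∂(Wxya x y m a)) := by
  obtain ⟨K, hK⟩ := hWt.exists_norm_integral_WxyaN_le hxy
  have hfin : ∀ N, IsFiniteMeasure (WxyaN x y a N) := fun N => by
    have := isFiniteMeasure_bridgeMeas x y (s := a ^ 2) (by positivity) N
    rw [WxyaN_eq_map]
    infer_instance
  have hmass : ∀ N, (WxyaN x y a N).real Set.univ ≤ K * ‖(1 : BoundedContinuousFunction
      (ℝ × Omega2 x y) ℝ)‖ := fun N => by
    simpa using (le_abs_self _).trans (hK a ha N 1)
  have hsum : IsFiniteMeasure (Measure.sum fun N : ℕ =>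
      ENNReal.ofReal (Real.exp (-m ^ 2 * a ^ 2 * (N + 1) / 2)) • WxyaN x y a N) := by
    refine ⟨?_⟩
    rw [Measure.sum_apply _ MeasurableSet.univ]
    refine lt_of_le_of_lt (ENNReal.tsum_le_tsum fun N => ?_)
      (((summable_exp_neg_mul_add_one (c := m ^ 2 * a ^ 2 / 2) (by positivity)).mul_right
        (K * ‖(1 : BoundedContinuousFunction (ℝ × Omega2 x y) ℝ)‖)).tsum_ofReal_lt_top)
    rw [Measure.smul_apply, smul_eq_mul, ENNReal.ofReal_mul (Real.exp_pos _).le,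
      show -m ^ 2 * a ^ 2 * ((N : ℝ) + 1) / 2 = -(m ^ 2 * a ^ 2 / 2) * (N + 1) by ring]
    gcongr
    rw [← ofReal_measureReal]
    exact ENNReal.ofReal_le_ofReal (hmass N)
  have hint : Integrable f (Measure.sum fun N : ℕ =>
      ENNReal.ofReal (Real.exp (-m ^ 2 * a ^ 2 * (N + 1) / 2)) • WxyaN x y a N) :=
    f.integrable _
  have hpos : 0 ≤ 1 - Real.exp (-m ^ 2 * a ^ 2 / 2) := by
    rw [sub_nonneg, Real.exp_le_one_iff]
    have : 0 ≤ m ^ 2 * a ^ 2 := by positivity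
    linarith
  rw [Wxya, integral_smul_measure, ENNReal.toReal_ofReal hpos, smul_eq_mul]
  refine (((hasSum_integral_measure hint).mul_left _).congr_fun fun N => ?_)
  rw [integral_smul_measure, ENNReal.toReal_ofReal (Real.exp_pos _).le, smul_eq_mul]

lemma tendsto_sq_nhdsGT_zero : Tendsto (fun a : ℝ => a ^ 2) (𝓝[>] 0) (𝓝[>] 0) := by
  refine tendsto_nhdsWithin_iff.mpr ⟨?_, ?_⟩
  · have : Tendsto (fun a : ℝ => a ^ 2) (𝓝 0) (𝓝 (0 ^ 2)) := (continuous_pow 2).tendsto 0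
    rw [zero_pow two_ne_zero] at this
    exact this.mono_left nhdsWithin_le_nhds
  · filter_upwards [self_mem_nhdsWithin] with a ha
    exact pow_pos (Set.mem_Ioi.mp ha) 2

lemma tendsto_one_sub_exp_div {c : ℝ} :
    Tendsto (fun a : ℝ => (1 - Real.exp (-c * a ^ 2)) / a ^ 2) (𝓝[>] 0) (𝓝 c) := by
  have hd : HasDerivAt (fun h : ℝ => 1 - Real.exp (-c * h)) c 0 := by
    have h := ((hasDerivAt_id (0 : ℝ)).const_mul (-c)).exp.const_sub 1
    simpa using h
  have hsq := tendsto_sq_nhdsGT_zero.mono_right (nhdsGT_le_nhdsNE 0)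
  refine ((hd.tendsto_slope.comp hsq).congr fun a => ?_)
  simp [slope_def_field]

lemma tendsto_floor_div_sq {t : ℝ} (ht : 0 < t) :
    Tendsto (fun a : ℝ => ⌊t / a ^ 2⌋₊) (𝓝[>] 0) atTop := by
  exact tendsto_nat_floor_atTop.comp ((tendsto_inv_nhdsGT_zero.comp tendsto_sq_nhdsGT_zero).const_mul_atTop ht)

lemma tendsto_sq_mul_floor_add_one {t : ℝ} (ht : 0 < t) :
    Tendsto (fun a : ℝ => a ^ 2 * ((⌊t / a ^ 2⌋₊ : ℝ) + 1)) (𝓝[>] 0) (𝓝 t) := by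
  have hup : Tendsto (fun a : ℝ => t + a ^ 2) (𝓝[>] 0) (𝓝 t) := by
    have := (tendsto_sq_nhdsGT_zero.mono_right nhdsWithin_le_nhds).const_add t
    rwa [add_zero] at this
  refine tendsto_of_tendsto_of_tendsto_of_le_of_le' tendsto_const_nhds hup ?_ ?_
  · filter_upwards [self_mem_nhdsWithin] with a ha
    have ha2 : 0 < a ^ 2 := pow_pos ha 2
    have := Nat.lt_floor_add_one (t / a ^ 2)
    rw [div_lt_iff₀ ha2] at this
    linarith
  · filter_upwards [self_mem_nhdsWithin] with a ha
    have ha2 : 0 < a ^ 2 := pow_pos ha 2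
    have := Nat.floor_le (div_pos ht ha2).le
    rw [le_div_iff₀ ha2] at this
    linarith

lemma continuousAt_heatKer (d : ℕ) {t : ℝ} (ht : 0 < t) (r : ℝ) :
    ContinuousAt (fun s => heatKer d s r) t := by
  unfold heatKer
  refine ContinuousAt.mul ?_ ?_
  · exact (continuousAt_const.mul continuousAt_id).rpow_const
      (Or.inl (mul_pos two_pi_pos ht).ne')
  · exact (continuousAt_const.div (continuousAt_const.mul continuousAt_id)
      (mul_pos two_pos ht).ne').rexp

lemma tendsto_integral_interp_sample_dilate {d : ℕ} {x y : Ed d} (μ : Measure (Omega2 x y))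
    [IsFiniteMeasure μ] (f : BoundedContinuousFunction (ℝ × Omega2 x y) ℝ) {ι : Type*}
    {l : Filter ι} [l.IsCountablyGenerated] {n : ι → ℕ} (hn : Tendsto n l atTop) {s : ι → ℝ}
    {t : ℝ} (hs : Tendsto s l (𝓝 t)) :
    Tendsto (fun i => ∫ ω, f (s i, interp x y (sample (n i) (dilate (√(s i)) ω))) ∂μ) l
      (𝓝 (∫ ω, f (t, dilate (√t) ω) ∂μ)) := by
  refine tendsto_integral_filter_of_dominated_convergence (fun _ => ‖f‖)
    (Eventually.of_forall fun i => ?_)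
    (Eventually.of_forall fun i => ae_of_all _ fun ω => f.norm_coe_le_norm _)
    (integrable_const _) (ae_of_all _ fun ω => ?_)
  · have hd : Continuous (dilate (√(s i)) : Omega2 x y → Omega2 x y) :=
      continuous_dilate.comp (Continuous.prodMk_right _)
    have hp : Continuous fun ω : Omega2 x y =>
        (s i, interp x y (sample (n i) (dilate (√(s i)) ω))) :=
      continuous_const.prodMk ((continuous_interp x y _).comp ((continuous_sample _).comp hd))
    exact (f.continuous.comp hp).aestronglyMeasurable
  · have hsqrt : Tendsto (fun i => (√(s i), ω)) l (𝓝 (√t, ω)) :=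
      hs.sqrt.prodMk_nhds tendsto_const_nhds
    have hdil : Tendsto (fun i => dilate (√(s i)) ω) l (𝓝 (dilate (√t) ω)) :=
      (continuous_dilate (x := x) (y := y)).continuousAt.tendsto.comp hsqrt
    exact (f.continuous.tendsto _).comp (hs.prodMk_nhds (tendsto_interp_sample hn hdil))

/-- The discrete pinned measures with `N ≈ t / a²` steps converge weakly to the pinned Wiener
measure of variance `t`. -/
lemma IsPinnedWienerFamily.tendsto_integral_WxyaN {d : ℕ} {x y : Ed d}
    {Wt : ℝ → Measure (Omega2 x y)} (hWt : IsPinnedWienerFamily x y Wt) {t : ℝ} (ht : 0 < t)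
    (f : BoundedContinuousFunction (ℝ × Omega2 x y) ℝ) :
    Tendsto (fun a : ℝ => ∫ p, f p ∂(WxyaN x y a ⌊t / a ^ 2⌋₊)) (𝓝[>] 0)
      (𝓝 (∫ ω, f (t, ω) ∂(Wt t))) := by
  have := (hWt 1 one_pos).1
  have hT := tendsto_sq_mul_floor_add_one ht
  have hsection : Continuous fun ω : Omega2 x y => (t, ω) := by fun_prop
  have hlim := hWt.integral_eq ht (f.compContinuous ⟨_, hsection⟩)
  simp only [BoundedContinuousFunction.compContinuous_apply, ContinuousMap.coe_mk] at hlim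
  rw [hlim]
  have hinner := tendsto_integral_interp_sample_dilate (Wt 1) f (tendsto_floor_div_sq ht) hT
  refine (((((continuousAt_heatKer d ht ‖x - y‖).tendsto.comp hT).div_const _).mul
    hinner).congr' ?_)
  filter_upwards [self_mem_nhdsWithin] with a ha
  exact (hWt.integral_WxyaN ha _ f).symm

/-- **Theorem 3.3 (piecewise-linear case)**: `W_{x,y,a} → (m²/2) W_{x,y}` weakly as
`a → 0⁺`, where `W_{x,y}(B) = ∫_0^∞ e^{-m²t/2} W_{x,y}^t(B_t) dt`. -/
theorem Wxya_tendsto_weakly (d : ℕ) (hd : 1 ≤ d) (m : ℝ) (hm : 0 < m)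
    (x y : Ed d) (hxy : x ≠ y)
    (Wt : ℝ → Measure (Omega2 x y)) (hWt : IsPinnedWienerFamily x y Wt) :
    ∀ f : BoundedContinuousFunction (ℝ × Omega2 x y) ℝ,
      Tendsto (fun a : ℝ => ∫ p, f p ∂(Wxya x y m a)) (nhdsWithin 0 (Set.Ioi 0))
        (nhds ((m ^ 2 / 2) *
          ∫ t in Set.Ioi (0 : ℝ), Real.exp (-m ^ 2 * t / 2) * ∫ ω, f (t, ω) ∂(Wt t))) := by
  intro f
  obtain ⟨K, hK⟩ := hWt.exists_norm_integral_WxyaN_le hxy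
  let J : ℝ → ℕ → ℝ := fun a N =>
    Real.exp (-m ^ 2 * a ^ 2 * (N + 1) / 2) * ∫ p, f p ∂(WxyaN x y a N)
  let bound : ℝ → ℝ := fun t => Real.exp (-(m ^ 2 / 2) * t) * (K * ‖f‖)
  have hbound_int : IntegrableOn bound (Set.Ioi 0) :=
    (exp_neg_integrableOn_Ioi 0 (by positivity)).mul_const _
  have hmeas : ∀ a, Measurable fun t : ℝ => J a ⌊t / a ^ 2⌋₊ := fun a =>
    (measurable_from_nat (f := J a)).comp (Nat.measurable_floor.comp (measurable_id.div_const _))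
  have hbound : ∀ a : ℝ, 0 < a → ∀ t : ℝ, ‖J a ⌊t / a ^ 2⌋₊‖ ≤ bound t := by
    intro a ha t
    have ha2 : 0 < a ^ 2 := by positivity
    have hlt := Nat.lt_floor_add_one (t / a ^ 2)
    rw [div_lt_iff₀ ha2] at hlt
    rw [norm_mul, Real.norm_of_nonneg (Real.exp_pos _).le]
    refine mul_le_mul (Real.exp_le_exp.mpr ?_) (hK a ha _ f) (norm_nonneg _) (Real.exp_pos _).le
    nlinarith [sq_nonneg m]
  have hJ : ∀ a : ℝ, 0 < a → IntegrableOn (fun t : ℝ => J a ⌊t / a ^ 2⌋₊) (Set.Ioi 0) :=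
    fun a ha => hbound_int.mono' (hmeas a).aestronglyMeasurable (ae_of_all _ (hbound a ha))
  have hlim : Tendsto (fun a : ℝ => ∫ t in Set.Ioi (0 : ℝ), J a ⌊t / a ^ 2⌋₊) (𝓝[>] 0)
      (𝓝 (∫ t in Set.Ioi (0 : ℝ), Real.exp (-m ^ 2 * t / 2) * ∫ ω, f (t, ω) ∂(Wt t))) := by
    refine tendsto_integral_filter_of_dominated_convergence bound
      (Eventually.of_forall fun a => (hmeas a).aestronglyMeasurable) ?_ hbound_int ?_
    · filter_upwards [self_mem_nhdsWithin] with a ha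
      exact ae_of_all _ (hbound a ha)
    · filter_upwards [ae_restrict_mem measurableSet_Ioi] with t ht
      refine Tendsto.mul ?_ (hWt.tendsto_integral_WxyaN ht f)
      refine (Real.continuous_exp.tendsto _).comp ?_
      refine (((tendsto_sq_mul_floor_add_one ht).const_mul (-m ^ 2)).div_const 2).congr
        fun a => ?_
      ring
  refine ((tendsto_one_sub_exp_div.mul hlim).congr' ?_)
  filter_upwards [self_mem_nhdsWithin] with a ha
  have ha2 : 0 < a ^ 2 := pow_pos ha 2
  have h1 := (hasSum_mul_of_integrableOn_floor ha2 (hJ a ha)).mul_left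
    ((1 - Real.exp (-m ^ 2 * a ^ 2 / 2)) / a ^ 2)
  have h2 := hWt.hasSum_integral_Wxya hxy hm ha f
  rw [show -(m ^ 2 / 2) * a ^ 2 = -m ^ 2 * a ^ 2 / 2 by ring]
  refine (h1.congr_fun fun N => ?_).unique h2
  rw [← mul_assoc (_ / _), div_mul_cancel₀ _ ha2.ne']

end
end
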